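/- arXiv:0904.1081 — 5 statements merged into one kernel-verified Lean document; each statement's English description precedes it below -/
import Mathlib

section
/- Let S be a countable subset of the positive real numbers. Then there exists a separable unital simple C*-algebra A with a unique tracial state τ such that S ⊆ F(A). -/
open scoped Matrix ComplexOrder

section CommonDefs

variable (A : Type*) [CStarAlgebra A]

/-- `τ` is a tracial state on the unital C*-algebra `A`. -/
structure IsTracialState (τ : A →ₗ[ℂ] ℂ) : Prop where
  map_one : τ 1 = 1
  nonneg : ∀ a : A, 0 ≤ τ (star a * a)
  tracial : ∀ a b : A, τ (a * b) = τ (b * a)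

/-- `A` is simple: every closed two-sided ideal is trivial. -/
def IsSimpleCStarAlgebra : Prop :=
  ∀ I : TwoSidedIdeal A, IsClosed (I : Set A) → I = ⊥ ∨ I = ⊤

/-- `φ` is a *-isomorphism from `A` onto the corner `p Mₙ(A) p`. -/
def IsCornerIso {n : ℕ} (p : Matrix (Fin n) (Fin n) A)
    (φ : A → Matrix (Fin n) (Fin n) A) : Prop :=
  Function.Injective φ ∧
  (∀ a b : A, φ (a + b) = φ a + φ b) ∧
  (∀ a b : A, φ (a * b) = φ a * φ b) ∧
  (∀ (c : ℂ) (a : A), φ (c • a) = c • φ a) ∧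
  (∀ a : A, φ (star a) = star (φ a)) ∧
  Set.range φ = {x : Matrix (Fin n) (Fin n) A | p * x * p = x}

/-- The fundamental group of a unital simple C*-algebra with unique tracial state `τ`:
the set of values `(τ ⊗ Tr)(p)` over projections `p ∈ Mₙ(A)` whose corner `p Mₙ(A) p`
is *-isomorphic to `A`. -/
def fundamentalGroup (τ : A →ₗ[ℂ] ℂ) : Set ℝ :=
  {t : ℝ | ∃ (n : ℕ) (p : Matrix (Fin n) (Fin n) A), 0 < n ∧
    p * p = p ∧ star p = p ∧ (∃ φ, IsCornerIso A p φ) ∧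
    (∑ i, τ (p i i)) = (t : ℂ)}

end CommonDefs

namespace FG

noncomputable section

open MeasureTheory Set

abbrev X : Type := Set.Ico (0:ℝ) 1

abbrev H : Type := lp (fun _ : X => ℂ) 2

lemma vfun_sum_le (f : X ≃. X) (ξ : H) (s : Finset X) :
    ∑ y ∈ s, ‖(f.symm y).elim 0 (ξ : X → ℂ)‖ ^ (2 : ENNReal).toReal
      ≤ ‖ξ‖ ^ (2 : ENNReal).toReal := by
  classical
  have h2 : (0:ℝ) < (2 : ENNReal).toReal := by norm_num
  let t : Finset X := s.biUnion (fun y => (f.symm y).toFinset)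
  refine le_trans ?_ (lp.sum_rpow_le_norm_rpow h2 ξ t)
  rw [Finset.sum_biUnion]
  · apply Finset.sum_le_sum
    intro y _
    cases h : f.symm y with
    | none => simp
    | some x => simp
  · intro y _ y' _ hne
    rw [Function.onFun, Finset.disjoint_left]
    intro x hx hx'
    simp only [Option.mem_toFinset] at hx hx'
    exact hne (f.symm.inj hx hx')

def V (f : X ≃. X) : H →L[ℂ] H :=
  LinearMap.mkContinuous
    { toFun := fun ξ => ⟨fun y => (f.symm y).elim 0 (ξ : X → ℂ),
        memℓp_gen' (vfun_sum_le f ξ)⟩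
      map_add' := by
        intro ξ η
        ext y
        change (f.symm y).elim 0 (⇑(ξ + η)) = (f.symm y).elim 0 (⇑ξ) + (f.symm y).elim 0 (⇑η)
        cases f.symm y
        · exact (add_zero (0:ℂ)).symm
        · rfl
      map_smul' := by
        intro c ξ
        ext y
        change (f.symm y).elim 0 _ = c * (f.symm y).elim 0 _
        cases f.symm y <;> simp } 1 (by
    intro ξ
    rw [one_mul]
    exact lp.norm_le_of_forall_sum_le (by norm_num) (norm_nonneg _) (vfun_sum_le f ξ))

lemma V_apply (f : X ≃. X) (ξ : H) (y : X) : (V f ξ) y = (f.symm y).elim 0 (ξ : X → ℂ) := rfl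

/-- basis vector -/
def dl (x : X) : H := lp.single 2 x (1:ℂ)

lemma dl_apply (x y : X) : dl x y = if y = x then 1 else 0 := by
  simp [dl, Pi.single_apply]

lemma norm_dl (x : X) : ‖dl x‖ = 1 := by
  simp [dl, lp.norm_single]

lemma inner_dl (x : X) (ξ : H) : inner ℂ (dl x) ξ = ξ x := by
  simp [dl, lp.inner_single_left]

/-- matrix coefficient -/
def co (a : H →L[ℂ] H) (y x : X) : ℂ := (a (dl x)) y

lemma co_inner (a : H →L[ℂ] H) (y x : X) : co a y x = inner ℂ (dl y) (a (dl x)) := by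
  rw [inner_dl]; rfl

lemma ext_co {a b : H →L[ℂ] H} (h : ∀ y x, co a y x = co b y x) : a = b := by
  apply lp.ext_continuousLinearMap (by norm_num)
  intro x
  ext
  · exact h _ _

lemma co_add (a b : H →L[ℂ] H) (y x : X) : co (a + b) y x = co a y x + co b y x := rfl
lemma co_sub (a b : H →L[ℂ] H) (y x : X) : co (a - b) y x = co a y x - co b y x := rfl
lemma co_smul (c : ℂ) (a : H →L[ℂ] H) (y x : X) : co (c • a) y x = c * co a y x := rfl

lemma norm_co_le (a : H →L[ℂ] H) (y x : X) : ‖co a y x‖ ≤ ‖a‖ := by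
  refine (lp.norm_apply_le_norm (by norm_num) _ _).trans ?_
  simpa [norm_dl] using a.le_opNorm (dl x)

lemma co_star (a : H →L[ℂ] H) (y x : X) : co (star a) y x = star (co a x y) := by
  rw [co_inner, co_inner, ContinuousLinearMap.star_eq_adjoint,
    ContinuousLinearMap.adjoint_inner_right]
  exact (inner_conj_symm _ _).symm

open Classical in
lemma co_V (f : X ≃. X) (y x : X) : co (V f) y x = if y ∈ f x then 1 else 0 := by
  rw [co, V_apply]
  have e : y ∈ f x ↔ x ∈ f.symm y := (PEquiv.mem_iff_mem f).symm
  rw [if_congr e rfl rfl]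
  cases h : f.symm y with
  | none => simp
  | some z => simp [dl_apply, eq_comm]

lemma V_star (f : X ≃. X) : star (V f) = V f.symm := by
  classical
  apply ext_co
  intro y x
  rw [co_star, co_V, co_V]
  simp only [PEquiv.mem_iff_mem]
  split_ifs <;> simp

lemma V_mul (f g : X ≃. X) : V g * V f = V (f.trans g) := by
  ext ξ y
  change ((V g) (V f ξ)) y = _
  rw [V_apply, V_apply, PEquiv.symm_trans_rev]
  cases h : g.symm y with
  | none => simp [PEquiv.trans, h]
  | some z => simp [PEquiv.trans, h, V_apply]

lemma V_congr {f g : X ≃. X} (h : ∀ x y, y ∈ f x ↔ y ∈ g x) : V f = V g := by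
  congr 1
  ext x y
  exact h x y

lemma V_eq_one {f : X ≃. X} (h : ∀ x y, y ∈ f x ↔ y = x) : V f = 1 := by
  apply ext_co
  intro y x
  rw [co_V, if_congr (h x y) rfl rfl]
  simp [co, dl_apply]

lemma V_eq_zero {f : X ≃. X} (h : ∀ x y, y ∉ f x) : V f = 0 := by
  apply ext_co
  intro y x
  rw [co_V, if_neg (h x y)]
  simp [co]

lemma V_add {f g h : X ≃. X} (h1 : ∀ x y, y ∈ h x ↔ (y ∈ f x ∨ y ∈ g x))
    (h2 : ∀ x y, y ∈ f x → y ∉ g x) : V f + V g = V h := by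
  classical
  apply ext_co
  intro y x
  have a1 := h1 x y
  have a2 := h2 x y
  rw [co_add, co_V, co_V, co_V]
  by_cases p : y ∈ f x <;> by_cases q : y ∈ g x <;> simp_all

/-- partial affine maps -/
def aff (m k a b : ℝ) (hm : 0 < m) : X ≃. X where
  toFun x := if h : (a ≤ x ∧ (x:ℝ) < b) ∧ m * x + k ∈ Set.Ico (0:ℝ) 1 then some ⟨_, h.2⟩ else none
  invFun y := if h : (a ≤ ((y:ℝ) - k) / m ∧ ((y:ℝ) - k) / m < b) ∧ ((y:ℝ) - k) / m ∈ Set.Ico (0:ℝ) 1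
    then some ⟨_, h.2⟩ else none
  inv := by
    intro x y
    have e : ((y:ℝ) - k) / m = x ↔ m * x + k = y := by
      rw [div_eq_iff hm.ne']
      constructor <;> intro h <;> linarith
    simp only [Option.mem_def, Option.dite_none_right_eq_some, Option.some.injEq, Subtype.ext_iff]
    constructor
    · rintro ⟨h, h'⟩
      rw [h'] at h
      have := e.1 h'
      exact ⟨⟨h.1, this ▸ y.2⟩, this⟩
    · rintro ⟨h, h'⟩
      have := e.2 h'
      rw [this]
      exact ⟨⟨h.1, x.2⟩, rfl⟩

lemma mem_aff {m k a b : ℝ} (hm : 0 < m) {x y : X} :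
    y ∈ aff m k a b hm x ↔ (a ≤ x ∧ (x:ℝ) < b) ∧ (y:ℝ) = m * x + k := by
  change y ∈ (if h : _ then _ else _) ↔ _
  simp only [Option.mem_def, Option.dite_none_right_eq_some, Option.some.injEq, Subtype.ext_iff]
  constructor
  · rintro ⟨h, h'⟩
    exact ⟨h.1, h'.symm⟩
  · rintro ⟨h, h'⟩
    exact ⟨⟨h, h' ▸ y.2⟩, h'.symm⟩

def IsAff (K : Subfield ℝ) (m : ℝ) (f : X ≃. X) : Prop :=
  ∃ a ∈ K, ∃ b ∈ K, ∃ k ∈ K, ∀ x y : X, y ∈ f x ↔ (a ≤ x ∧ (x:ℝ) < b) ∧ (y:ℝ) = m * x + k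

variable {K : Subfield ℝ}

lemma max_mem' {a b : ℝ} (ha : a ∈ K) (hb : b ∈ K) : max a b ∈ K := by
  rcases max_choice a b with h | h <;> rw [h] <;> assumption
lemma min_mem' {a b : ℝ} (ha : a ∈ K) (hb : b ∈ K) : min a b ∈ K := by
  rcases min_choice a b with h | h <;> rw [h] <;> assumption

lemma IsAff.symm {m : ℝ} (hm : 0 < m) (hK : m ∈ K) {f : X ≃. X} (h : IsAff K m f) :
    IsAff K m⁻¹ f.symm := by
  obtain ⟨a, ha, b, hb, k, hk, H⟩ := h
  refine ⟨m * a + k, K.add_mem (K.mul_mem hK ha) hk, m * b + k, K.add_mem (K.mul_mem hK hb) hk,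
    -(m⁻¹ * k), K.neg_mem (K.mul_mem (K.inv_mem hK) hk), ?_⟩
  intro y x
  rw [PEquiv.mem_iff_mem, H]
  have e : (x:ℝ) = m⁻¹ * y + -(m⁻¹ * k) ↔ (y:ℝ) = m * x + k := by
    constructor
    · intro h; rw [h]; field_simp; ring
    · intro h; rw [h]; field_simp; ring
  rw [e]
  apply and_congr_left
  intro h
  rw [h]
  simp [hm]

lemma IsAff.trans {m m' : ℝ} (hm : 0 < m) (hK : m ∈ K) (hK' : m' ∈ K)
    {f g : X ≃. X} (h : IsAff K m f) (h' : IsAff K m' g) : IsAff K (m' * m) (f.trans g) := by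
  obtain ⟨a, ha, b, hb, k, hk, H⟩ := h
  obtain ⟨a', ha', b', hb', k', hk', H'⟩ := h'
  refine ⟨max a (max ((a' - k) / m) ((0 - k) / m)),
    max_mem' ha (max_mem' (K.div_mem (K.sub_mem ha' hk) hK)
      (K.div_mem (K.sub_mem K.zero_mem hk) hK)), min b (min ((b' - k) / m) ((1 - k) / m)),
    min_mem' hb (min_mem' (K.div_mem (K.sub_mem hb' hk) hK)
      (K.div_mem (K.sub_mem K.one_mem hk) hK)),
    m' * k + k', K.add_mem (K.mul_mem hK' hk) hk', ?_⟩
  intro x z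
  rw [PEquiv.mem_trans]
  simp only [H, H', max_le_iff, lt_min_iff, div_le_iff₀ hm, lt_div_iff₀ hm]
  constructor
  · rintro ⟨y, ⟨⟨h1, h2⟩, h3⟩, ⟨h4, h5⟩, h6⟩
    have y0 := y.2.1
    have y1 := y.2.2
    rw [h3] at h4 h5 h6 y0 y1
    refine ⟨⟨⟨h1, ?_, ?_⟩, h2, ?_, ?_⟩, ?_⟩
    all_goals linarith
  · rintro ⟨⟨⟨h1, h2, h3⟩, h4, h5, h6⟩, h7⟩
    refine ⟨⟨m * x + k, ?_, ?_⟩, ⟨⟨h1, h4⟩, rfl⟩, ⟨?_, ?_⟩, ?_⟩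
    all_goals try dsimp only
    all_goals linarith

lemma isAff_aff {m k a b : ℝ} (hm : 0 < m) (hk : k ∈ K) (ha : a ∈ K) (hb : b ∈ K) :
    IsAff K m (aff m k a b hm) := ⟨a, ha, b, hb, k, hk, fun _ _ => mem_aff hm⟩

instance : CStarAlgebra (H →L[ℂ] H) where

variable (K) in
def Gen : Set (H →L[ℂ] H) := V '' {f | IsAff K 1 f}

lemma isAff_one_symm {f : X ≃. X} (h : IsAff K 1 f) : IsAff K 1 f.symm := by
  simpa using h.symm one_pos K.one_mem

lemma isAff_one_trans {f g : X ≃. X} (h : IsAff K 1 f) (h' : IsAff K 1 g) :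
    IsAff K 1 (f.trans g) := by
  simpa using h.trans one_pos K.one_mem K.one_mem h'

/-- interval projection -/
def pr (a b : ℝ) : X ≃. X := aff 1 0 a b one_pos

lemma mem_pr {a b : ℝ} {x y : X} : y ∈ pr a b x ↔ (a ≤ x ∧ (x:ℝ) < b) ∧ y = x := by
  rw [pr, mem_aff, Subtype.ext_iff]; simp

lemma isAff_pr {a b : ℝ} (ha : a ∈ K) (hb : b ∈ K) : IsAff K 1 (pr a b) :=
  isAff_aff one_pos K.zero_mem ha hb

lemma V_pr_one : V (pr 0 1) = 1 := by
  apply V_eq_one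
  intro x y
  rw [mem_pr]
  exact and_iff_right ⟨x.2.1, x.2.2⟩

lemma V_pr_one' {b : ℝ} (hb : 1 ≤ b) : V (pr 0 b) = 1 := by
  apply V_eq_one
  intro x y
  rw [mem_pr]
  exact and_iff_right ⟨x.2.1, x.2.2.trans_le hb⟩

lemma V_pr_add {a b c : ℝ} (h : a ≤ b) (h' : b ≤ c) : V (pr a b) + V (pr b c) = V (pr a c) := by
  apply V_add
  · intro x y
    simp only [mem_pr]
    constructor
    · rintro ⟨⟨h1, h2⟩, h3⟩
      rcases lt_or_ge (x:ℝ) b with h4 | h4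
      · exact Or.inl ⟨⟨h1, h4⟩, h3⟩
      · exact Or.inr ⟨⟨h4, h2⟩, h3⟩
    · rintro (⟨⟨h1, h2⟩, h3⟩ | ⟨⟨h1, h2⟩, h3⟩)
      · exact ⟨⟨h1, h2.trans_le h'⟩, h3⟩
      · exact ⟨⟨h.trans h1, h2⟩, h3⟩
  · intro x y
    simp only [mem_pr]
    rintro ⟨⟨h1, h2⟩, h3⟩ ⟨⟨h4, h5⟩, h6⟩
    linarith

lemma V_pr_sum {t : ℝ} (ht : 0 ≤ t) (n : ℕ) :
    ∑ j ∈ Finset.range n, V (pr (j * t) ((j + 1 : ℕ) * t)) = V (pr 0 (n * t)) := by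
  induction n with
  | zero =>
    symm
    simp only [Finset.range_zero, Finset.sum_empty]
    apply V_eq_zero
    intro x y
    rw [mem_pr]
    rintro ⟨⟨h1, h2⟩, -⟩
    norm_num at h2
    linarith
  | succ n ih =>
    rw [Finset.sum_range_succ, ih]
    apply V_pr_add
    · positivity
    · push_cast; nlinarith

variable (K) in
def alg0 : StarSubalgebra ℂ (H →L[ℂ] H) where
  carrier := Submodule.span ℂ (Gen K)
  mul_mem' := by
    intro a b ha hb
    change a * b ∈ Submodule.span ℂ (Gen K)
    have : a * b ∈ Submodule.span ℂ (Gen K) * Submodule.span ℂ (Gen K) :=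
      Submodule.mul_mem_mul ha hb
    rw [Submodule.span_mul_span] at this
    refine Submodule.span_mono ?_ this
    rintro _ ⟨_, ⟨f, hf, rfl⟩, _, ⟨g, hg, rfl⟩, rfl⟩
    exact ⟨_, isAff_one_trans hg hf, (V_mul g f).symm⟩
  add_mem' := fun ha hb => Submodule.add_mem _ ha hb
  algebraMap_mem' := by
    intro c
    change algebraMap ℂ (H →L[ℂ] H) c ∈ Submodule.span ℂ (Gen K)
    rw [Algebra.algebraMap_eq_smul_one]
    exact Submodule.smul_mem _ _
      (Submodule.subset_span ⟨_, isAff_pr K.zero_mem K.one_mem, V_pr_one⟩)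
  star_mem' := by
    intro a ha
    change star a ∈ Submodule.span ℂ (Gen K)
    change a ∈ Submodule.span ℂ (Gen K) at ha
    induction ha using Submodule.span_induction with
    | mem x h =>
      obtain ⟨f, hf, rfl⟩ := h
      exact Submodule.subset_span ⟨_, isAff_one_symm hf, (V_star f).symm⟩
    | zero => simp
    | add x y _ _ hx hy => rw [star_add]; exact Submodule.add_mem _ hx hy
    | smul c x _ hx => rw [star_smul]; exact Submodule.smul_mem _ _ hx

variable (K) in
def Alg : StarSubalgebra ℂ (H →L[ℂ] H) := (alg0 K).topologicalClosure

instance : IsClosed ((Alg K : StarSubalgebra ℂ (H →L[ℂ] H)) : Set (H →L[ℂ] H)) :=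
  (alg0 K).isClosed_topologicalClosure

lemma coe_Alg : (Alg K : Set (H →L[ℂ] H)) = closure (Submodule.span ℂ (Gen K) : Set _) := rfl

lemma V_mem {f : X ≃. X} (hf : IsAff K 1 f) : V f ∈ Alg K :=
  subset_closure (Submodule.subset_span ⟨f, hf, rfl⟩)

/-- generators as elements of the algebra -/
def VA (f : X ≃. X) (hf : IsAff K 1 f) : Alg K := ⟨V f, V_mem hf⟩

lemma coe_VA (f : X ≃. X) (hf : IsAff K 1 f) : (VA f hf : H →L[ℂ] H) = V f := rfl

lemma Alg_approx (a : Alg K) {ε : ℝ} (hε : 0 < ε) :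
    ∃ b : Alg K, (b : H →L[ℂ] H) ∈ Submodule.span ℂ (Gen K) ∧ ‖a - b‖ < ε := by
  have h : (a : H →L[ℂ] H) ∈ closure (Submodule.span ℂ (Gen K) : Set _) := a.2
  obtain ⟨b, hb, hab⟩ := Metric.mem_closure_iff.1 h ε hε
  refine ⟨⟨b, subset_closure hb⟩, hb, ?_⟩
  rwa [dist_eq_norm] at hab

lemma span_ind {P : Alg K → Prop} 
    (hgen : ∀ f hf, P (VA f hf)) (hadd : ∀ a b, P a → P b → P (a + b))
    (hsmul : ∀ (c : ℂ) a, P a → P (c • a)) (a : Alg K)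
    (ha : (a : H →L[ℂ] H) ∈ Submodule.span ℂ (Gen K)) : P a := by
  obtain ⟨a, ha'⟩ := a
  change a ∈ Submodule.span ℂ (Gen K) at ha
  have key : ∀ h : a ∈ Alg K, P ⟨a, h⟩ := by
    clear ha'
    induction ha using Submodule.span_induction with
    | mem x h =>
      obtain ⟨f, hf, rfl⟩ := h
      intro h
      exact hgen f hf
    | zero =>
      intro h
      have := hsmul 0 _ (hgen (pr 0 1) (isAff_pr K.zero_mem K.one_mem))
      rw [zero_smul] at this
      exact this
    | add x y hx hy h1 h2 =>
      intro h
      exact hadd _ _ (h1 (subset_closure hx)) (h2 (subset_closure hy))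
    | smul c x hx h1 =>
      intro h
      exact hsmul c _ (h1 (subset_closure hx))
  exact key ha'

lemma Alg_ind {P : Alg K → Prop} (hcl : IsClosed {a | P a})
    (hgen : ∀ f hf, P (VA f hf)) (hadd : ∀ a b, P a → P b → P (a + b))
    (hsmul : ∀ (c : ℂ) a, P a → P (c • a)) (a : Alg K) : P a := by
  have : a ∈ closure {a | P a} := by
    rw [Metric.mem_closure_iff]
    intro ε hε
    obtain ⟨b, hb, hab⟩ := Alg_approx a hε
    exact ⟨b, span_ind hgen hadd hsmul b hb, by rwa [dist_eq_norm]⟩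
  rwa [hcl.closure_eq] at this

lemma Alg_separable (hK : Countable K) : TopologicalSpace.SeparableSpace (Alg K) := by
  have hc : (Gen K).Countable := by
    have : Gen K ⊆ Set.range (fun t : K × K × K => V (aff 1 t.1 t.2.1 t.2.2 one_pos)) := by
      rintro _ ⟨f, ⟨a, ha, b, hb, k, hk, h⟩, rfl⟩
      refine ⟨⟨⟨k, hk⟩, ⟨a, ha⟩, ⟨b, hb⟩⟩, V_congr ?_⟩
      intro x y
      rw [mem_aff, h]
    exact (Set.countable_range _).mono this
  have h1 : TopologicalSpace.IsSeparable (Alg K : Set (H →L[ℂ] H)) := by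
    rw [coe_Alg]
    exact (hc.isSeparable.span (R := ℂ)).closure
  exact h1.separableSpace

lemma Alg_conj {L R : H →L[ℂ] H} (h : ∀ f, IsAff K 1 f → L * V f * R ∈ Alg K) (a : Alg K) :
    L * a * R ∈ Alg K := by
  refine Alg_ind (P := fun a => L * (a : H →L[ℂ] H) * R ∈ Alg K) ?_ ?_ ?_ ?_ a
  · exact IsClosed.preimage (f := fun a : Alg K => L * (a : H →L[ℂ] H) * R)
      (by fun_prop) (inferInstanceAs (IsClosed (Alg K : Set (H →L[ℂ] H))))
  · exact h
  · intro a b ha hb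
    have := (Alg K).add_mem ha hb
    rwa [← add_mul, ← mul_add] at this
  · intro c a ha
    have := (Alg K).smul_mem ha c
    rwa [← smul_mul_assoc, ← mul_smul_comm] at this

lemma pr_f_pr {c d : ℝ} (f : X ≃. X) :
    V (pr c d) * V f * V (pr c d) = V (((pr c d).trans f).trans (pr c d)) := by
  rw [mul_assoc, V_mul, V_mul]

lemma mem_pr_f_pr {c d : ℝ} (f : X ≃. X) (x y : X) :
    y ∈ ((pr c d).trans f).trans (pr c d) x ↔
      ((c ≤ x ∧ (x:ℝ) < d) ∧ (c ≤ y ∧ (y:ℝ) < d)) ∧ y ∈ f x := by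
  simp only [PEquiv.mem_trans, mem_pr]
  constructor
  · rintro ⟨z, ⟨w, ⟨h1, rfl⟩, h2⟩, h3, rfl⟩
    exact ⟨⟨h1, h3⟩, h2⟩
  · rintro ⟨⟨h1, h2⟩, h3⟩
    exact ⟨y, ⟨x, ⟨h1, rfl⟩, h3⟩, h2, rfl⟩

lemma local_const (x : X) (b : Alg K) (hb : (b : H →L[ℂ] H) ∈ Submodule.span ℂ (Gen K)) :
    ∃ η > 0, ∀ c d : ℝ, (x:ℝ) ≤ c → d ≤ x + η →
      V (pr c d) * b * V (pr c d) = co b x x • V (pr c d) := by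
  refine span_ind (P := fun b => ∃ η > 0, ∀ c d : ℝ, (x:ℝ) ≤ c → d ≤ x + η →
      V (pr c d) * (b : H →L[ℂ] H) * V (pr c d) = co b x x • V (pr c d)) ?_ ?_ ?_ b hb
  · intro f hf
    simp only [coe_VA, pr_f_pr, co_V]
    obtain ⟨a, ha, b, hb, k, hk, h⟩ := hf
    rw [if_congr (h x x) rfl rfl]
    rcases eq_or_ne k 0 with rfl | hk0
    · rcases lt_or_ge (x:ℝ) a with h1 | h1
      · refine ⟨a - x, by linarith, fun c d hc hd => ?_⟩
        rw [if_neg (by rintro ⟨⟨h2, h3⟩, h4⟩; linarith), zero_smul]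
        apply V_eq_zero
        intro z y
        rw [mem_pr_f_pr, h]
        rintro ⟨⟨h2, h3⟩, h4, h5⟩
        linarith
      · rcases lt_or_ge (x:ℝ) b with h2 | h2
        · refine ⟨b - x, by linarith, fun c d hc hd => ?_⟩
          rw [if_pos ⟨⟨h1, h2⟩, by simp⟩, one_smul]
          apply V_congr
          intro z y
          rw [mem_pr_f_pr, mem_pr, h, Subtype.ext_iff]
          constructor
          · rintro ⟨⟨h2, h3⟩, h4, h5⟩
            exact ⟨h2, by linarith⟩
          · rintro ⟨h2, h3⟩
            rw [h3]
            exact ⟨⟨h2, h2⟩, ⟨by linarith, by linarith⟩, by ring⟩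
        · refine ⟨1, one_pos, fun c d hc hd => ?_⟩
          rw [if_neg (by rintro ⟨⟨h2, h3⟩, h4⟩; linarith), zero_smul]
          apply V_eq_zero
          intro z y
          rw [mem_pr_f_pr, h]
          rintro ⟨⟨h2, h3⟩, h4, h5⟩
          linarith
    · refine ⟨|k|, abs_pos.2 hk0, fun c d hc hd => ?_⟩
      rw [if_neg (by rintro ⟨h2, h4⟩; apply hk0; linarith), zero_smul]
      apply V_eq_zero
      intro z y
      rw [mem_pr_f_pr, h]
      rintro ⟨⟨h2, h3⟩, h4, h5⟩
      have : |k| < |k| := by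
        conv_lhs => rw [show k = y - z by linarith]
        rw [abs_lt]
        constructor <;> linarith
      exact lt_irrefl _ this
  · rintro a b ⟨η, hη, h⟩ ⟨η', hη', h'⟩
    refine ⟨min η η', lt_min hη hη', fun c d hc hd => ?_⟩
    have h1 := h c d hc (hd.trans (by gcongr; exact min_le_left _ _))
    have h2 := h' c d hc (hd.trans (by gcongr; exact min_le_right _ _))
    change V (pr c d) * ((a : H →L[ℂ] H) + b) * V (pr c d) = co ((a : H →L[ℂ] H) + b) x x • _
    rw [co_add, mul_add, add_mul, h1, h2, add_smul]
  · rintro r a ⟨η, hη, h⟩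
    refine ⟨η, hη, fun c d hc hd => ?_⟩
    change V (pr c d) * (r • (a : H →L[ℂ] H)) * V (pr c d) = co (r • (a : H →L[ℂ] H)) x x • _
    rw [co_smul, mul_smul_comm, smul_mul_assoc, h c d hc hd, smul_smul]

lemma co_star_mul (y : H →L[ℂ] H) (x : X) : co (star y * y) x x = ((‖y (dl x)‖ ^ 2 : ℝ) : ℂ) := by
  rw [co_inner, ContinuousLinearMap.star_eq_adjoint]
  change inner ℂ (dl x) (ContinuousLinearMap.adjoint y (y (dl x))) = _
  rw [ContinuousLinearMap.adjoint_inner_right, inner_self_eq_norm_sq_to_K]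
  push_cast
  rfl

lemma norm_V_le (f : X ≃. X) : ‖V f‖ ≤ 1 := LinearMap.mkContinuous_norm_le _ zero_le_one _

lemma rat_mem (q : ℚ) : (q : ℝ) ∈ K := SubfieldClass.ratCast_mem K q

lemma natdiv_mem (j N : ℕ) : (j : ℝ) * (1 / N : ℝ) ∈ K := by
  have := rat_mem (K := K) ((j : ℚ) * (1 / N))
  push_cast at this
  exact this

/-- shift operator mapping `[q, q+t)` to `[q', q'+t)` -/
lemma shift_mul {q q' t : ℝ} (hq : 0 ≤ q) (hqt : q + t ≤ 1) (h0 : 0 ≤ q') (h1 : q' + t ≤ 1) :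
    V (aff 1 (q' - q) q (q + t) one_pos) * star (V (aff 1 (q' - q) q (q + t) one_pos))
      = V (pr q' (q' + t)) ∧
    star (V (aff 1 (q' - q) q (q + t) one_pos)) * V (aff 1 (q' - q) q (q + t) one_pos)
      = V (pr q (q + t)) ∧
    V (aff 1 (q' - q) q (q + t) one_pos) * V (pr q (q + t)) = 
      V (aff 1 (q' - q) q (q + t) one_pos) := by
  rw [V_star, V_mul, V_mul, V_mul]
  refine ⟨V_congr ?_, V_congr ?_, V_congr ?_⟩
  · intro x y
    simp only [PEquiv.mem_trans, PEquiv.mem_iff_mem, mem_pr, mem_aff, Subtype.ext_iff]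
    constructor
    · rintro ⟨z, ⟨⟨h2, h3⟩, h4⟩, ⟨h5, h6⟩, h7⟩
      refine ⟨⟨?_, ?_⟩, ?_⟩ <;> linarith
    · rintro ⟨⟨h2, h3⟩, h4⟩
      refine ⟨⟨x - q' + q, ?_, ?_⟩, ⟨⟨?_, ?_⟩, ?_⟩, ⟨?_, ?_⟩, ?_⟩ <;> (try dsimp only) <;> linarith
  · intro x y
    simp only [PEquiv.mem_trans, PEquiv.mem_iff_mem, mem_pr, mem_aff, Subtype.ext_iff]
    constructor
    · rintro ⟨z, ⟨⟨h2, h3⟩, h4⟩, ⟨h5, h6⟩, h7⟩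
      refine ⟨⟨?_, ?_⟩, ?_⟩ <;> linarith
    · rintro ⟨⟨h2, h3⟩, h4⟩
      refine ⟨⟨x + q' - q, ?_, ?_⟩, ⟨⟨?_, ?_⟩, ?_⟩, ⟨?_, ?_⟩, ?_⟩ <;> (try dsimp only) <;> linarith
  · intro x y
    simp only [PEquiv.mem_trans, mem_pr, mem_aff, Subtype.ext_iff]
    constructor
    · rintro ⟨z, ⟨⟨h2, h3⟩, h4⟩, ⟨h5, h6⟩, h7⟩
      refine ⟨⟨?_, ?_⟩, ?_⟩ <;> linarith
    · rintro ⟨⟨h2, h3⟩, h4⟩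
      exact ⟨x, ⟨⟨h2, h3⟩, rfl⟩, ⟨h2, h3⟩, h4⟩

lemma Alg_simple : IsSimpleCStarAlgebra (Alg K) := by
  intro I _
  by_contra! hI
  obtain ⟨hbot, htop⟩ := hI
  apply htop
  obtain ⟨y, hyI, hy0⟩ : ∃ y ∈ I, y ≠ 0 := by
    by_contra! h
    apply hbot
    rw [eq_bot_iff]
    intro y hy
    rw [h y hy]
    exact zero_mem _
  obtain ⟨x, hx⟩ : ∃ x, (y : H →L[ℂ] H) (dl x) ≠ 0 := by
    by_contra! h
    apply hy0
    apply Subtype.ext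
    apply ext_co
    intro z x
    simp [co, h]
  set a : Alg K := star y * y with ha
  have haI : a ∈ I := I.mul_mem_left _ _ hyI
  set r : ℝ := ‖(y : H →L[ℂ] H) (dl x)‖ ^ 2 with hr
  have hr0 : 0 < r := by positivity
  have hco : co (a : H →L[ℂ] H) x x = (r : ℂ) := co_star_mul _ _
  obtain ⟨b, hb, hab⟩ := Alg_approx a (ε := r / 4) (by positivity)
  obtain ⟨η, hη, hloc⟩ := local_const x b hb
  set c : ℂ := co (b : H →L[ℂ] H) x x with hc
  have hcr : ‖(r : ℂ) - c‖ < r / 4 := by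
    rw [← hco, hc, ← co_sub]
    exact (norm_co_le _ _ _).trans_lt hab
  have hcn : r / 4 < ‖c‖ := by
    have := norm_sub_norm_le (r : ℂ) c
    rw [Complex.norm_real, Real.norm_of_nonneg hr0.le] at this
    linarith
  have hc0 : c ≠ 0 := by
    rintro h
    rw [h, norm_zero] at hcn
    linarith
  obtain ⟨q, hq1, hq2⟩ := exists_rat_btwn (show (x:ℝ) < min (x + η) 1 from
    lt_min (by linarith) x.2.2)
  obtain ⟨n, hn⟩ := exists_nat_one_div_lt (sub_pos.2 hq2)
  set t : ℝ := 1 / ((n + 1 : ℕ) : ℝ) with ht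
  have ht0 : 0 < t := by positivity
  have hqt : (q:ℝ) + t ≤ min (x + η) 1 := by
    rw [ht]; push_cast; linarith
  have hqt1 := hqt.trans (min_le_right _ _)
  have htK : t ∈ K := by
    have := natdiv_mem (K := K) 1 (n + 1)
    rwa [Nat.cast_one, one_mul] at this
  have hq0 : (0:ℝ) ≤ q := x.2.1.trans hq1.le
  set e : Alg K := VA (pr q (q + t)) (isAff_pr (rat_mem q) (K.add_mem (rat_mem q) htK)) with he
  have hee : e * e = e := by
    apply Subtype.ext
    change V _ * V _ = V _
    rw [V_mul]
    apply V_congr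
    intro x y
    simp only [PEquiv.mem_trans, mem_pr]
    constructor
    · rintro ⟨z, ⟨h1, rfl⟩, h2, rfl⟩
      exact ⟨h1, rfl⟩
    · rintro ⟨h1, rfl⟩
      exact ⟨_, ⟨h1, rfl⟩, h1, rfl⟩
  have hebe : e * b * e = c • e := by
    apply Subtype.ext
    exact hloc q (q + t) hq1.le (hqt.trans (min_le_left _ _))
  have hen : ‖e‖ ≤ 1 := norm_V_le _
  set d : Alg K := e - c⁻¹ • (e * a * e) with hd
  have hd' : d = c⁻¹ • (e * (b - a) * e) := by
    rw [hd, mul_sub, sub_mul, hebe, smul_sub, smul_smul, inv_mul_cancel₀ hc0, one_smul]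
  have hdn : ‖d‖ < 1 := by
    rw [hd', norm_smul, norm_inv, inv_mul_lt_iff₀ (by linarith), mul_one]
    calc ‖e * (b - a) * e‖ ≤ ‖e‖ * ‖b - a‖ * ‖e‖ :=
          (norm_mul_le _ _).trans (by gcongr; exact norm_mul_le _ _)
      _ ≤ 1 * ‖b - a‖ * 1 := by gcongr
      _ < ‖c‖ := by rw [norm_sub_rev]; linarith
  obtain ⟨u, hu⟩ := isUnit_one_sub_of_norm_lt_one hdn
  have heI : e ∈ I := by
    have h1 : e * (1 - d) = c⁻¹ • (e * a * e) := by
      rw [hd, mul_sub, mul_one, mul_sub, hee, mul_smul_comm, ← mul_assoc, ← mul_assoc, hee]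
      abel
    have h2 : e = (c⁻¹ • e) * a * (e * ↑u⁻¹) := by
      rw [← hu] at h1
      rw [← mul_assoc, smul_mul_assoc, smul_mul_assoc, ← h1, mul_assoc, Units.mul_inv, mul_one]
    rw [h2]
    exact I.mul_mem_right _ _ (I.mul_mem_left _ _ haI)
  have h1I : (1 : Alg K) ∈ I := by
    have hsum : (1 : Alg K) = ∑ j ∈ Finset.range (n + 1),
        VA (pr (j * t) ((j + 1 : ℕ) * t)) (isAff_pr (natdiv_mem _ _) (natdiv_mem _ _)) := by
      apply Subtype.ext
      rw [AddSubmonoidClass.coe_finsetSum]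
      simp only [coe_VA]
      rw [V_pr_sum ht0.le]
      rw [V_pr_one']
      · rfl
      · rw [ht]; field_simp; rfl
    rw [hsum]
    apply sum_mem
    intro j hj
    have hj' : (j + 1 : ℕ) ≤ n + 1 := by simpa using hj
    have hj2 : (j:ℝ) * t + t ≤ 1 := by
      rw [ht]
      have : ((j + 1 : ℕ) : ℝ) ≤ (n + 1 : ℕ) := by exact_mod_cast hj'
      rw [← add_one_mul, mul_one_div, div_le_one (by positivity)]
      push_cast at this ⊢
      exact this
    obtain ⟨s1, s2, s3⟩ := shift_mul hq0 hqt1 (q' := j * t) (by positivity) hj2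
    set v : Alg K := VA (aff 1 (j * t - q) q (q + t) one_pos)
      (isAff_aff one_pos (K.sub_mem (natdiv_mem _ _) (rat_mem q)) (rat_mem q)
        (K.add_mem (rat_mem q) htK)) with hv
    have : VA (pr (j * t) ((j + 1 : ℕ) * t)) (isAff_pr (natdiv_mem _ _) (natdiv_mem _ _))
        = v * e * star v := by
      apply Subtype.ext
      change V _ = V _ * V _ * star (V _)
      rw [s3, s1]
      congr 2
      push_cast; ring
    rw [this]
    exact I.mul_mem_right _ _ (I.mul_mem_left _ _ heI)
  rw [eq_top_iff]
  intro z _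
  have := I.mul_mem_left z _ h1I
  rwa [mul_one] at this

lemma cont_of_nonneg (σ : Alg K →ₗ[ℂ] ℂ) (h : ∀ a, 0 ≤ σ (star a * a)) : Continuous σ := by
  let _ : PartialOrder (Alg K) := CStarAlgebra.spectralOrder (Alg K)
  have _ : StarOrderedRing (Alg K) := CStarAlgebra.spectralOrderedRing (Alg K)
  let f : Alg K →ₚ[ℂ] ℂ := PositiveLinearMap.mk₀ σ (by
    intro x hx
    obtain ⟨y, rfl⟩ := CStarAlgebra.nonneg_iff_eq_star_mul_self.1 hx
    exact h y)
  exact map_continuous f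

lemma additive_eq (G : K → ℝ)
    (hadd : ∀ s t : K, 0 ≤ (s:ℝ) → 0 ≤ (t:ℝ) → (s:ℝ) + t ≤ 1 → G (s + t) = G s + G t)
    (hnn : ∀ t : K, 0 ≤ (t:ℝ) → (t:ℝ) ≤ 1 → 0 ≤ G t) (h1 : G 1 = 1) (t : K)
    (ht0 : 0 ≤ (t:ℝ)) (ht1 : (t:ℝ) ≤ 1) : G t = t := by
  have h0 : G 0 = 0 := by
    have := hadd 0 0 (by simp) (by simp) (by simp)
    rw [add_zero] at this
    linarith
  have hmul : ∀ (s : K), 0 ≤ (s:ℝ) → ∀ j : ℕ, (j:ℝ) * s ≤ 1 → G ((j:K) * s) = j * G s := by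
    intro s hs j
    induction j with
    | zero => intro _; simp [h0]
    | succ j ih =>
      intro hj
      push_cast at hj ⊢
      rw [add_one_mul, hadd _ _ (by push_cast; positivity) hs (by push_cast; linarith),
        ih (by linarith)]
      ring
  have hmono : ∀ s u : K, 0 ≤ (s:ℝ) → (s:ℝ) ≤ u → (u:ℝ) ≤ 1 → G s ≤ G u := by
    intro s u hs hsu hu
    have := hadd s (u - s) hs (by push_cast; linarith) (by push_cast; linarith)
    rw [add_sub_cancel] at this
    have h2 := hnn (u - s) (by push_cast; linarith) (by push_cast; linarith)
    linarith
  have hinv : ∀ n : ℕ, G (((n + 1 : ℕ) : K)⁻¹) = ((n + 1 : ℕ) : ℝ)⁻¹ := by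
    intro n
    have hn : ((n + 1 : ℕ) : ℝ) ≠ 0 := by positivity
    have hn' : ((n + 1 : ℕ) : K) ≠ 0 := by positivity
    have := hmul (((n + 1 : ℕ) : K)⁻¹) (by push_cast; positivity) (n + 1)
      (by push_cast; rw [mul_inv_cancel₀]; exact_mod_cast hn)
    rw [mul_inv_cancel₀ hn', h1] at this
    exact eq_inv_of_mul_eq_one_right this.symm
  rcases ht1.eq_or_lt with h | hlt
  · have : t = 1 := Subtype.ext h
    rw [this, h1]; rfl
  have key : ∀ n : ℕ, |G t - t| ≤ 1 / ((n:ℝ) + 1) := by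
    intro n
    set N : ℕ := n + 1 with hN
    have hNpos : (0:ℝ) < N := by positivity
    set j := ⌊(N:ℝ) * t⌋₊ with hj
    have j1 : (j:ℝ) ≤ N * t := Nat.floor_le (by positivity)
    have j2 : (N:ℝ) * t < j + 1 := Nat.lt_floor_add_one _
    have j3 : j < N := by
      have : (j:ℝ) < N := by nlinarith
      exact_mod_cast this
    have j4 : ((j + 1 : ℕ):ℝ) ≤ N := by exact_mod_cast j3
    have e1 := hmul ((N : K)⁻¹) (by push_cast; positivity) j
      (by push_cast; rw [← div_eq_mul_inv, div_le_one hNpos]; push_cast at j4; linarith)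
    have e2 := hmul ((N : K)⁻¹) (by push_cast; positivity) (j + 1)
      (by push_cast; rw [← div_eq_mul_inv, div_le_one hNpos]; push_cast at j4; linarith)
    rw [hinv] at e1 e2
    have m1 := hmono ((j : K) * (N : K)⁻¹) t (by push_cast; positivity)
      (by push_cast; rw [← div_eq_mul_inv, div_le_iff₀ hNpos]; linarith) ht1
    have m2 := hmono t (((j + 1 : ℕ) : K) * (N : K)⁻¹) ht0
      (by push_cast; rw [← div_eq_mul_inv, le_div_iff₀ hNpos]; linarith)
      (by push_cast; rw [← div_eq_mul_inv, div_le_one hNpos]; push_cast at j4; linarith)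
    rw [e1] at m1
    rw [e2] at m2
    rw [← div_eq_mul_inv, div_le_iff₀ hNpos] at m1
    rw [← div_eq_mul_inv, le_div_iff₀ hNpos] at m2
    push_cast at m2
    have hNn : (n:ℝ) + 1 = N := by rw [hN]; push_cast; rfl
    rw [hNn, abs_le]
    constructor
    · rw [← neg_div, div_le_iff₀ hNpos]; linarith
    · rw [le_div_iff₀ hNpos]; linarith
  have : |G t - t| ≤ 0 := ge_of_tendsto' tendsto_one_div_add_atTop_nhds_zero_nat key
  have := abs_nonpos_iff.1 this
  linarith

def PA (a b : K) : Alg K := VA (pr a b) (isAff_pr a.2 b.2)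

lemma coe_PA (a b : K) : (PA a b : H →L[ℂ] H) = V (pr a b) := rfl

lemma V_pr_star (a b : ℝ) : star (V (pr a b)) = V (pr a b) := by
  rw [V_star]
  apply V_congr
  intro x y
  rw [PEquiv.mem_iff_mem, mem_pr, mem_pr]
  constructor
  · rintro ⟨h, rfl⟩; exact ⟨h, rfl⟩
  · rintro ⟨h, rfl⟩; exact ⟨h, rfl⟩

lemma V_pr_mul_self (a b : ℝ) : V (pr a b) * V (pr a b) = V (pr a b) := by
  rw [V_mul]
  apply V_congr
  intro x y
  simp only [PEquiv.mem_trans, mem_pr]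
  constructor
  · rintro ⟨z, ⟨h1, rfl⟩, h2, rfl⟩
    exact ⟨h1, rfl⟩
  · rintro ⟨h1, rfl⟩
    exact ⟨_, ⟨h1, rfl⟩, h1, rfl⟩

lemma tr_shift {σ : Alg K →ₗ[ℂ] ℂ} (hσ : IsTracialState (Alg K) σ)
    {q q' t : K} (hq : 0 ≤ (q:ℝ)) (hqt : (q:ℝ) + t ≤ 1) (h0 : 0 ≤ (q':ℝ))
    (h1 : (q':ℝ) + t ≤ 1) : σ (PA q (q + t)) = σ (PA q' (q' + t)) := by
  obtain ⟨s1, s2, -⟩ := shift_mul hq hqt h0 h1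
  set v : Alg K := VA (aff 1 (q' - q) q (q + t) one_pos)
    (isAff_aff one_pos (K.sub_mem q'.2 q.2) q.2 (K.add_mem q.2 t.2)) with hv
  have e1 : PA q' (q' + t) = v * star v := Subtype.ext s1.symm
  have e2 : PA q (q + t) = star v * v := Subtype.ext s2.symm
  rw [e1, e2, hσ.tracial]

lemma tr_nonneg {σ : Alg K →ₗ[ℂ] ℂ} (hσ : IsTracialState (Alg K) σ)
    (a b : K) : 0 ≤ σ (PA a b) := by
  have : PA a b = star (PA a b) * PA a b := by
    apply Subtype.ext
    change V _ = star (V _) * V _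
    rw [V_pr_star, V_pr_mul_self]
  rw [this]
  exact hσ.nonneg _

lemma tr_zero {σ : Alg K →ₗ[ℂ] ℂ} (hσ : IsTracialState (Alg K) σ)
    (t : K) (h0 : 0 ≤ (t:ℝ)) (h1 : (t:ℝ) ≤ 1) : σ (PA 0 t) = ((t:ℝ) : ℂ) := by
  have hre : ∀ t : K, σ (PA 0 t) = ((σ (PA 0 t)).re : ℂ) := by
    intro t
    have := tr_nonneg hσ 0 t
    exact Complex.ext rfl (by simpa using (Complex.nonneg_iff.1 this).2.symm)
  rw [hre]
  congr 1
  refine additive_eq (fun t => (σ (PA 0 t)).re) ?_ ?_ ?_ t h0 h1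
  · intro s t hs ht hst
    have e : PA 0 (s + t) = PA 0 s + PA s (s + t) :=
      Subtype.ext (V_pr_add (a := 0) (b := s) (c := s + t) hs (by linarith)).symm
    have e2 := tr_shift hσ (q := s) (q' := 0) (t := t) hs hst (by simp) (by simp; linarith)
    rw [e, map_add, e2, zero_add, Complex.add_re]
  · intro t _ _
    exact (Complex.nonneg_iff.1 (tr_nonneg hσ 0 t)).1
  · have : (PA 0 1 : Alg K) = 1 := Subtype.ext V_pr_one
    rw [this, hσ.map_one]; rfl

lemma tr_pr {σ : Alg K →ₗ[ℂ] ℂ} (hσ : IsTracialState (Alg K) σ)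
    {a b : K} (h0 : 0 ≤ (a:ℝ)) (hab : (a:ℝ) ≤ b) (h1 : (b:ℝ) ≤ 1) :
    σ (PA a b) = ((b - a : ℝ) : ℂ) := by
  have := tr_shift hσ (q := a) (q' := 0) (t := b - a) h0 (by push_cast; linarith) (by simp)
    (by push_cast; linarith)
  rw [add_sub_cancel, zero_add, tr_zero hσ _ (by push_cast; linarith) (by push_cast; linarith)]
    at this
  rw [this]; push_cast; rfl

lemma tr_off {σ : Alg K →ₗ[ℂ] ℂ} (hσ : IsTracialState (Alg K) σ)
    {f : X ≃. X} (hf : IsAff K 1 f) {k : ℝ} (hk : k ≠ 0)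
    (h : ∀ x y : X, y ∈ f x → (y:ℝ) = x + k) : σ (VA f hf) = 0 := by
  obtain ⟨n, hn⟩ := exists_nat_one_div_lt (abs_pos.2 hk)
  set t : ℝ := 1 / ((n + 1 : ℕ) : ℝ) with ht
  have ht0 : 0 < t := by positivity
  have hsum : (1 : Alg K) = ∑ j ∈ Finset.range (n + 1),
      VA (pr (j * t) ((j + 1 : ℕ) * t)) (isAff_pr (natdiv_mem _ _) (natdiv_mem _ _)) := by
    apply Subtype.ext
    rw [AddSubmonoidClass.coe_finsetSum]
    simp only [coe_VA]
    rw [V_pr_sum ht0.le]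
    rw [V_pr_one']
    · rfl
    · rw [ht]; field_simp; rfl
  rw [← mul_one (VA f hf), hsum, Finset.mul_sum, map_sum]
  apply Finset.sum_eq_zero
  intro j _
  set e : Alg K := VA (pr (j * t) ((j + 1 : ℕ) * t)) (isAff_pr (natdiv_mem _ _) (natdiv_mem _ _))
  have hee : e * e = e := Subtype.ext (V_pr_mul_self _ _)
  have hz : e * VA f hf * e = 0 := by
    apply Subtype.ext
    change V _ * V _ * V _ = 0
    rw [pr_f_pr]
    apply V_eq_zero
    intro x y
    rw [mem_pr_f_pr]
    rintro ⟨⟨⟨h1, h2⟩, h3, h4⟩, h5⟩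
    have h6 := h x y h5
    have : |k| < t := by
      rw [show k = y - x by linarith, abs_lt]
      push_cast at h2 h4
      constructor <;> linarith
    rw [ht] at this
    push_cast at this
    linarith
  rw [← hee, ← mul_assoc, hσ.tracial, ← mul_assoc, hz, map_zero]

lemma tr_gen_eq {σ τ : Alg K →ₗ[ℂ] ℂ} (hσ : IsTracialState (Alg K) σ)
    (hτ : IsTracialState (Alg K) τ) (f : X ≃. X) (hf : IsAff K 1 f) :
    σ (VA f hf) = τ (VA f hf) := by
  have hf' := hf
  obtain ⟨a, ha, b, hb, k, hk, h⟩ := hf'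
  rcases eq_or_ne k 0 with rfl | hk0
  · have ha' : max 0 (min a 1) ∈ K := max_mem' K.zero_mem (min_mem' ha K.one_mem)
    have hb' : max (max 0 (min a 1)) (min b 1) ∈ K := max_mem' ha' (min_mem' hb K.one_mem)
    have e : VA f hf = PA ⟨_, ha'⟩ ⟨_, hb'⟩ := by
      apply Subtype.ext
      rw [coe_VA, coe_PA]
      apply V_congr
      intro x y
      rw [h, mem_pr, Subtype.ext_iff, one_mul, add_zero]
      apply and_congr_left
      intro _
      have x0 := x.2.1
      have x1 := x.2.2
      simp only [max_le_iff, min_le_iff, lt_max_iff, lt_min_iff]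
      constructor
      · rintro ⟨h1, h2⟩
        exact ⟨⟨x0, Or.inl h1⟩, Or.inr ⟨h2, x1⟩⟩
      · rintro ⟨⟨_, h1⟩, h2⟩
        have h1 : a ≤ x := h1.resolve_right (by linarith)
        refine ⟨h1, ?_⟩
        rcases h2 with (h2 | h2) | h2
        · linarith
        · linarith [h2.1]
        · exact h2.1
    have i0 : (0:ℝ) ≤ ((⟨_, ha'⟩ : K) : ℝ) := le_max_left _ _
    have i1 : ((⟨_, ha'⟩ : K) : ℝ) ≤ ((⟨_, hb'⟩ : K) : ℝ) := le_max_left _ _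
    have i2 : ((⟨_, hb'⟩ : K) : ℝ) ≤ 1 :=
      max_le (max_le zero_le_one (min_le_right _ _)) (min_le_right _ _)
    rw [e, tr_pr hσ i0 i1 i2, tr_pr hτ i0 i1 i2]
  · have h' : ∀ x y : X, y ∈ f x → (y:ℝ) = x + k := by
      intro x y hxy
      have := ((h x y).1 hxy).2
      linarith
    rw [tr_off hσ hf hk0 h', tr_off hτ hf hk0 h']

lemma tr_unique {σ τ : Alg K →ₗ[ℂ] ℂ} (hσ : IsTracialState (Alg K) σ)
    (hτ : IsTracialState (Alg K) τ) : σ = τ := by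
  ext a
  refine Alg_ind (P := fun a => σ a = τ a) ?_ ?_ ?_ ?_ a
  · exact isClosed_eq (cont_of_nonneg σ hσ.nonneg) (cont_of_nonneg τ hτ.nonneg)
  · exact tr_gen_eq hσ hτ
  · intro a b h1 h2
    rw [map_add, map_add, h1, h2]
  · intro c a h1
    rw [map_smul, map_smul, h1]

/-- diagonal function -/
def D (a : H →L[ℂ] H) : ℝ → ℂ := fun x =>
  if h : x ∈ Set.Ico (0:ℝ) 1 then co a ⟨x, h⟩ ⟨x, h⟩ else 0

lemma D_of_mem (a : H →L[ℂ] H) {x : ℝ} (h : x ∈ Set.Ico (0:ℝ) 1) :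
    D a x = co a ⟨x, h⟩ ⟨x, h⟩ := dif_pos h

lemma D_of_notMem (a : H →L[ℂ] H) {x : ℝ} (h : x ∉ Set.Ico (0:ℝ) 1) : D a x = 0 := dif_neg h

lemma D_add (a b : H →L[ℂ] H) (x : ℝ) : D (a + b) x = D a x + D b x := by
  by_cases h : x ∈ Set.Ico (0:ℝ) 1
  · simp only [D_of_mem _ h, co_add]
  · simp only [D_of_notMem _ h, add_zero]

lemma D_sub (a b : H →L[ℂ] H) (x : ℝ) : D (a - b) x = D a x - D b x := by
  by_cases h : x ∈ Set.Ico (0:ℝ) 1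
  · simp only [D_of_mem _ h, co_sub]
  · simp only [D_of_notMem _ h, sub_zero]

lemma D_smul (c : ℂ) (a : H →L[ℂ] H) (x : ℝ) : D (c • a) x = c * D a x := by
  by_cases h : x ∈ Set.Ico (0:ℝ) 1
  · simp only [D_of_mem _ h, co_smul]
  · simp only [D_of_notMem _ h, mul_zero]

lemma norm_D_le (a : H →L[ℂ] H) (x : ℝ) : ‖D a x‖ ≤ ‖a‖ := by
  by_cases h : x ∈ Set.Ico (0:ℝ) 1
  · rw [D_of_mem _ h]; exact norm_co_le _ _ _
  · rw [D_of_notMem _ h, norm_zero]; exact norm_nonneg _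

lemma D_measurable (a : Alg K) : Measurable (D a) := by
  refine Alg_ind (P := fun a => Measurable (D (a : H →L[ℂ] H))) ?_ ?_ ?_ ?_ a
  · apply IsSeqClosed.isClosed
    intro u a hu hua
    refine measurable_of_tendsto_metrizable (f := fun n => D (u n : H →L[ℂ] H)) hu ?_
    rw [tendsto_pi_nhds]
    intro x
    rw [tendsto_iff_norm_sub_tendsto_zero] at hua ⊢
    refine squeeze_zero (fun _ => norm_nonneg _) (fun n => ?_) hua
    rw [← D_sub]
    exact norm_D_le _ _
  · rintro f hf
    change Measurable (D (V f))
    obtain ⟨a, ha, b, hb, k, hk, h⟩ := hf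
    have : D (V f) = Set.indicator {x : ℝ | (x ∈ Set.Ico (0:ℝ) 1 ∧ x ∈ Set.Ico a b) ∧ k = 0} 1 := by
      funext x
      by_cases hx : x ∈ Set.Ico (0:ℝ) 1
      · rw [D_of_mem _ hx, co_V, if_congr (h _ _) rfl rfl]
        simp only [Set.indicator_apply, Set.mem_ofPred_eq, Pi.one_apply]
        apply if_congr _ rfl rfl
        simp only [hx, true_and, Set.mem_Ico, one_mul]
        apply and_congr_right
        intro _
        constructor <;> intro h <;> linarith
      · rw [D_of_notMem _ hx, Set.indicator_of_notMem]
        exact fun h => hx h.1.1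
    rw [this]
    apply measurable_one.indicator
    exact (measurableSet_Ico.inter measurableSet_Ico).inter (MeasurableSet.const _)
  · intro a b ha hb
    have : D ((a + b : Alg K) : H →L[ℂ] H) = D (a : H →L[ℂ] H) + D (b : H →L[ℂ] H) :=
      funext fun x => D_add _ _ x
    rw [this]
    exact ha.add hb
  · intro c a ha
    have : D ((c • a : Alg K) : H →L[ℂ] H) = fun x => c * D (a : H →L[ℂ] H) x :=
      funext fun x => D_smul _ _ x
    rw [this]
    exact ha.const_mul c

lemma D_integrable (a : Alg K) : Integrable (D a) := by
  have hi : Integrable (Set.indicator (Set.Ico (0:ℝ) 1) (fun _ => ‖a‖)) := by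
    rw [integrable_indicator_iff measurableSet_Ico]
    exact integrableOn_const (by simp)
  refine hi.mono' (D_measurable a).aestronglyMeasurable (Filter.Eventually.of_forall fun x => ?_)
  by_cases h : x ∈ Set.Ico (0:ℝ) 1
  · rw [Set.indicator_of_mem h]; exact norm_D_le _ _
  · rw [D_of_notMem _ h, Set.indicator_of_notMem h, norm_zero]

variable (K) in
def tau : Alg K →ₗ[ℂ] ℂ where
  toFun a := ∫ x, D (a : H →L[ℂ] H) x
  map_add' a b := by
    rw [← integral_add (D_integrable a) (D_integrable b)]
    exact integral_congr_ae (Filter.Eventually.of_forall fun x => D_add _ _ x)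
  map_smul' c a := by
    rw [RingHom.id_apply, smul_eq_mul, ← integral_const_mul]
    exact integral_congr_ae (Filter.Eventually.of_forall fun x => D_smul _ _ x)

lemma tau_apply (a : Alg K) : tau K a = ∫ x, D (a : H →L[ℂ] H) x := rfl

lemma tau_nonneg (a : Alg K) : 0 ≤ tau K (star a * a) := by
  rw [tau_apply]
  have : ∀ x, D ((star a * a : Alg K) : H →L[ℂ] H) x
      = (((if h : x ∈ Set.Ico (0:ℝ) 1 then ‖(a : H →L[ℂ] H) (dl ⟨x, h⟩)‖ ^ 2 else 0 : ℝ)) : ℂ) := by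
    intro x
    by_cases h : x ∈ Set.Ico (0:ℝ) 1
    · rw [D_of_mem _ h, dif_pos h]
      exact co_star_mul _ _
    · rw [D_of_notMem _ h, dif_neg h]; rfl
  simp_rw [this]
  rw [integral_complex_ofReal]
  apply Complex.zero_le_real.2
  apply integral_nonneg
  intro x
  dsimp only
  simp only [Pi.zero_apply]
  split_ifs
  · positivity
  · exact le_rfl

lemma co_V_mul (f : X ≃. X) (c : H →L[ℂ] H) (y : X) :
    co (V f * c) y y = (f.symm y).elim 0 (fun z => co c z y) := by
  change (V f (c (dl y))) y = _
  rw [V_apply]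
  rfl

lemma V_dl_some {f : X ≃. X} {x y : X} (h : y ∈ f x) : V f (dl x) = dl y := by
  ext z
  change co (V f) z x = _
  rw [co_V, dl_apply]
  apply if_congr _ rfl rfl
  constructor
  · intro h'; exact Option.mem_unique h' h
  · rintro rfl; exact h

lemma V_dl_none {f : X ≃. X} {x : X} (h : ∀ y, y ∉ f x) : V f (dl x) = 0 := by
  ext z
  change co (V f) z x = _
  rw [co_V, if_neg (h z)]
  rfl

lemma D_shift {f : X ≃. X} {k : ℝ} (h : ∀ x y : X, y ∈ f x → (y:ℝ) = x + k)
    (c : H →L[ℂ] H) (x : ℝ) : D (V f * c) (x + k) = D (c * V f) x := by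
  by_cases P : ∃ (hx : x ∈ Set.Ico (0:ℝ) 1) (hy : x + k ∈ Set.Ico (0:ℝ) 1),
      (⟨x + k, hy⟩ : X) ∈ f ⟨x, hx⟩
  · obtain ⟨hx, hy, hm⟩ := P
    rw [D_of_mem _ hx, D_of_mem _ hy, co_V_mul]
    have e1 : f.symm ⟨x + k, hy⟩ = some ⟨x, hx⟩ := (PEquiv.mem_iff_mem f).2 hm
    rw [e1]
    change co c _ _ = (c (V f (dl _))) _
    rw [V_dl_some hm]
    rfl
  · push Not at P
    have e1 : D (V f * c) (x + k) = 0 := by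
      by_cases hy : x + k ∈ Set.Ico (0:ℝ) 1
      · rw [D_of_mem _ hy, co_V_mul]
        cases hz : f.symm ⟨x + k, hy⟩ with
        | none => rfl
        | some z =>
          exfalso
          have hz' : (⟨x + k, hy⟩ : X) ∈ f z := (PEquiv.mem_iff_mem f).1 hz
          have hzx : (z:ℝ) = x := by have := h _ _ hz'; dsimp only at this; linarith
          have hx : x ∈ Set.Ico (0:ℝ) 1 := hzx ▸ z.2
          have : z = ⟨x, hx⟩ := Subtype.ext hzx
          rw [this] at hz'
          exact P hx hy hz'
      · exact D_of_notMem _ hy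
    have e2 : D (c * V f) x = 0 := by
      by_cases hx : x ∈ Set.Ico (0:ℝ) 1
      · rw [D_of_mem _ hx]
        change (c (V f (dl _))) _ = 0
        rw [V_dl_none, map_zero]
        · rfl
        · intro y hy
          have e := h _ _ hy
          dsimp only at e
          have hy' : x + k ∈ Set.Ico (0:ℝ) 1 := e ▸ y.2
          have : y = ⟨x + k, hy'⟩ := Subtype.ext e
          rw [this] at hy
          exact P hx hy' hy
      · exact D_of_notMem _ hx
    rw [e1, e2]

lemma tau_tracial (v a : Alg K) : tau K (v * a) = tau K (a * v) := by
  have hc : Continuous (tau K) := cont_of_nonneg _ tau_nonneg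
  revert a
  refine Alg_ind (P := fun v => ∀ a, tau K (v * a) = tau K (a * v)) ?_ ?_ ?_ ?_ v
  · rw [Set.ofPred_forall]
    refine isClosed_iInter fun a => isClosed_eq ?_ ?_
    · exact hc.comp (continuous_id.mul continuous_const)
    · exact hc.comp (continuous_const.mul continuous_id)
  · intro f hf c
    have hf' := hf
    obtain ⟨a, ha, b, hb, k, hk, h⟩ := hf'
    rw [tau_apply, tau_apply]
    change ∫ x, D (V f * (c : H →L[ℂ] H)) x = ∫ x, D ((c : H →L[ℂ] H) * V f) x
    rw [← integral_add_right_eq_self _ k]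
    congr 1
    funext x
    apply D_shift
    intro x y hxy
    have := ((h x y).1 hxy).2
    linarith
  · intro v w hv hw a
    rw [add_mul, mul_add, map_add, map_add, hv, hw]
  · intro c v hv a
    rw [smul_mul_assoc, mul_smul_comm, map_smul, map_smul, hv]

lemma tau_one : tau K 1 = 1 := by
  have : ∀ x, D ((1 : Alg K) : H →L[ℂ] H) x = Set.indicator (Set.Ico (0:ℝ) 1) (fun _ => (1:ℂ)) x := by
    intro x
    by_cases h : x ∈ Set.Ico (0:ℝ) 1
    · rw [D_of_mem _ h, Set.indicator_of_mem h]
      change dl _ _ = 1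
      rw [dl_apply, if_pos rfl]
    · rw [D_of_notMem _ h, Set.indicator_of_notMem h]
  rw [tau_apply]
  simp_rw [this]
  rw [integral_indicator measurableSet_Ico]
  simp

lemma tau_tracialState : IsTracialState (Alg K) (tau K) := ⟨tau_one, tau_nonneg, tau_tracial⟩

section corner

variable {s : ℝ} (hs : 0 < s)

/-- scaling partial isometries -/
def wf (i : ℕ) : X ≃. X := aff s (-(i:ℝ)) 0 1 hs

lemma mem_wf {i : ℕ} {x y : X} : y ∈ wf hs i x ↔ (y:ℝ) = s * x - i := by
  rw [wf, mem_aff]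
  have : (0 ≤ (x:ℝ) ∧ (x:ℝ) < 1) := x.2
  rw [and_iff_right this, sub_eq_add_neg]

def W (i : ℕ) : H →L[ℂ] H := V (wf hs i)

lemma isAff_wf (hK : s ∈ K) (i : ℕ) : IsAff K s (wf hs i) :=
  isAff_aff hs (K.neg_mem (natCast_mem K i)) K.zero_mem K.one_mem

lemma W_star_mul (i : ℕ) : star (W hs i) * W hs i = V (pr (i * s⁻¹) ((i + 1 : ℕ) * s⁻¹)) := by
  rw [W, V_star, V_mul]
  apply V_congr
  intro x y
  simp only [PEquiv.mem_trans, PEquiv.mem_iff_mem, mem_wf, mem_pr, ← div_eq_mul_inv,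
    div_le_iff₀ hs, lt_div_iff₀ hs]
  push_cast
  constructor
  · rintro ⟨z, h1, h2⟩
    have := z.2.1
    have := z.2.2
    refine ⟨⟨by linarith, by linarith⟩, Subtype.ext ?_⟩
    have h3 : s * (y:ℝ) = s * x := by linarith
    exact mul_left_cancel₀ hs.ne' h3
  · rintro ⟨⟨h1, h2⟩, rfl⟩
    exact ⟨⟨s * y - i, by linarith, by linarith⟩, rfl, rfl⟩

lemma W_mul_star (i : ℕ) : W hs i * star (W hs i) = V (pr (-i) (s - i)) := by
  rw [W, V_star, V_mul]
  apply V_congr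
  intro x y
  simp only [PEquiv.mem_trans, PEquiv.mem_iff_mem, mem_wf, mem_pr]
  constructor
  · rintro ⟨z, h1, h2⟩
    have h3 : s * z < s * 1 := by gcongr; exact z.2.2
    have h4 := x.2.1
    have h5 : (0:ℝ) ≤ i := by positivity
    refine ⟨⟨by linarith, by linarith⟩, Subtype.ext (by linarith)⟩
  · rintro ⟨⟨h1, h2⟩, rfl⟩
    have h4 := y.2.1
    refine ⟨⟨(y + i) / s, by positivity, ?_⟩, ?_, ?_⟩
    · rw [div_lt_one hs]; linarith
    · field_simp; ring
    · field_simp; ring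

lemma W_sum {n : ℕ} (hn : s ≤ n) : ∑ i : Fin n, star (W hs i) * W hs i = 1 := by
  simp only [W_star_mul]
  rw [Fin.sum_univ_eq_sum_range (fun i => V (pr (i * s⁻¹) ((i + 1 : ℕ) * s⁻¹))) n,
    V_pr_sum (by positivity)]
  apply V_pr_one'
  rw [← div_eq_mul_inv, le_div_iff₀ hs, one_mul]
  exact hn

lemma W_conj (hK : s ∈ K) (i j : ℕ) (a : Alg K) : W hs i * a * star (W hs j) ∈ Alg K := by
  apply Alg_conj
  intro f hf
  rw [W, W, V_star, mul_assoc, V_mul, V_mul]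
  apply V_mem
  have h1 := (isAff_wf (K := K) hs hK j).symm hs hK
  have h2 := h1.trans (inv_pos.2 hs) (K.inv_mem hK) K.one_mem hf
  have h3 := h2.trans (by positivity) (K.mul_mem K.one_mem (K.inv_mem hK)) hK
    (isAff_wf (K := K) hs hK i)
  rwa [one_mul, mul_inv_cancel₀ hs.ne'] at h3

lemma W_conj' (hK : s ∈ K) (i j : ℕ) (a : Alg K) : star (W hs i) * a * W hs j ∈ Alg K := by
  apply Alg_conj
  intro f hf
  rw [W, W, V_star, mul_assoc, V_mul, V_mul]
  apply V_mem
  have h1 := isAff_wf (K := K) hs hK j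
  have h2 := h1.trans hs hK K.one_mem hf
  have h3 := h2.trans (by positivity) (K.mul_mem K.one_mem hK) (K.inv_mem hK)
    ((isAff_wf (K := K) hs hK i).symm hs hK)
  rwa [one_mul, inv_mul_cancel₀ hs.ne'] at h3

def phi (hK : s ∈ K) (n : ℕ) (a : Alg K) : Matrix (Fin n) (Fin n) (Alg K) :=
  fun i j => ⟨W hs i * a * star (W hs j), W_conj hs hK i j a⟩

lemma phi_mul (hK : s ∈ K) {n : ℕ} (hn : s ≤ n) (a b : Alg K) :
    phi hs hK n (a * b) = phi hs hK n a * phi hs hK n b := by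
  ext1 i k
  apply Subtype.ext
  rw [Matrix.mul_apply, AddSubmonoidClass.coe_finsetSum]
  change W hs i * ((a : H →L[ℂ] H) * b) * star (W hs k) =
    ∑ j : Fin n, (W hs i * a * star (W hs j)) * (W hs j * b * star (W hs k))
  have : ∀ j : Fin n, (W hs i * a * star (W hs j)) * (W hs j * b * star (W hs k))
      = (W hs i * a) * (star (W hs j) * W hs j) * (b * star (W hs k)) := by
    intro j; simp only [mul_assoc]
  simp only [this]
  rw [← Finset.sum_mul, ← Finset.mul_sum, W_sum hs hn]
  simp only [mul_assoc, mul_one, one_mul]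

lemma phi_star (hK : s ∈ K) (n : ℕ) (a : Alg K) :
    phi hs hK n (star a) = star (phi hs hK n a) := by
  ext1 i k
  apply Subtype.ext
  change W hs i * (star (a : H →L[ℂ] H)) * star (W hs k) = star (W hs k * a * star (W hs i))
  simp only [star_mul, star_star, mul_assoc]

lemma phi_iso (hK : s ∈ K) {n : ℕ} (hn : s ≤ n) :
    IsCornerIso (Alg K) (phi hs hK n 1) (phi hs hK n) := by
  refine ⟨?_, ?_, phi_mul hs hK hn, ?_, phi_star hs hK n, ?_⟩
  · have key : ∀ a : Alg K, (a : H →L[ℂ] H) = ∑ i : Fin n, ∑ j : Fin n,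
        star (W hs i) * (phi hs hK n a i j : H →L[ℂ] H) * W hs j := by
      intro a
      have : ∀ i j : Fin n, star (W hs i) * (phi hs hK n a i j : H →L[ℂ] H) * W hs j
          = (star (W hs i) * W hs i) * a * (star (W hs j) * W hs j) := by
        intro i j
        change star (W hs i) * (W hs i * a * star (W hs j)) * W hs j = _
        simp only [mul_assoc]
      simp only [this]
      simp only [← Finset.mul_sum, ← Finset.sum_mul]
      rw [W_sum hs hn, one_mul, mul_one]
    intro a b hab
    apply Subtype.ext
    rw [key a, key b, hab]
  · intro a b
    ext1 i k
    apply Subtype.ext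
    change W hs i * ((a : H →L[ℂ] H) + b) * star (W hs k) =
      W hs i * a * star (W hs k) + W hs i * b * star (W hs k)
    rw [mul_add, add_mul]
  · intro c a
    ext1 i k
    apply Subtype.ext
    change W hs i * (c • (a : H →L[ℂ] H)) * star (W hs k) = c • (W hs i * a * star (W hs k))
    rw [mul_smul_comm, smul_mul_assoc]
  · ext x
    constructor
    · rintro ⟨a, rfl⟩
      change phi hs hK n 1 * phi hs hK n a * phi hs hK n 1 = _
      rw [← phi_mul hs hK hn, ← phi_mul hs hK hn, one_mul, mul_one]
    · intro hx
      change phi hs hK n 1 * x * phi hs hK n 1 = x at hx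
      refine ⟨∑ i : Fin n, ∑ j : Fin n,
        ⟨star (W hs i) * (x i j : H →L[ℂ] H) * W hs j, W_conj' hs hK i j _⟩, ?_⟩
      have hm : ∀ k l, (phi hs hK n 1 * x * phi hs hK n 1) k l =
          ∑ i, ∑ j, phi hs hK n 1 k i * x i j * phi hs hK n 1 j l := by
        intro k l
        simp only [Matrix.mul_apply, Finset.sum_mul]
        exact Finset.sum_comm
      refine Eq.trans ?_ hx
      ext1 k l
      rw [hm]
      apply Subtype.ext
      have hc : ((∑ i, ∑ j, phi hs hK n 1 k i * x i j * phi hs hK n 1 j l : Alg K) : H →L[ℂ] H)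
          = ∑ i : Fin n, ∑ j : Fin n,
            (W hs k * 1 * star (W hs i)) * x i j * (W hs j * 1 * star (W hs l)) := by
        simp only [AddSubmonoidClass.coe_finsetSum]
        rfl
      rw [hc]
      change W hs k * ((∑ i : Fin n, ∑ j : Fin n,
        (⟨star (W hs i) * (x i j : H →L[ℂ] H) * W hs j, W_conj' hs hK i j _⟩ : Alg K) : Alg K) :
          H →L[ℂ] H) * star (W hs l) = ∑ i : Fin n, ∑ j : Fin n,
            (W hs k * 1 * star (W hs i)) * x i j * (W hs j * 1 * star (W hs l))
      simp only [AddSubmonoidClass.coe_finsetSum, Finset.mul_sum, Finset.sum_mul]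
      refine Finset.sum_congr rfl fun i _ => Finset.sum_congr rfl fun j _ => ?_
      simp only [mul_assoc, one_mul]

lemma mem_fund {s : ℝ} (hs : 0 < s) (hK : s ∈ K) : s ∈ fundamentalGroup (Alg K) (tau K) := by
  obtain ⟨m, hm1, hm2⟩ : ∃ m : ℕ, (m:ℝ) < s ∧ s ≤ (m + 1 : ℕ) := by
    refine ⟨⌈s⌉₊ - 1, ?_, ?_⟩
    · have h := Nat.ceil_lt_add_one hs.le
      have h0 : 0 < ⌈s⌉₊ := Nat.ceil_pos.2 hs
      rw [Nat.cast_sub h0]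
      push_cast
      linarith
    · have h0 : 0 < ⌈s⌉₊ := Nat.ceil_pos.2 hs
      rw [Nat.sub_add_cancel h0]
      exact Nat.le_ceil s
  refine ⟨m + 1, phi hs hK (m + 1) 1, Nat.succ_pos m, ?_, ?_, ⟨_, phi_iso hs hK hm2⟩, ?_⟩
  · rw [← phi_mul hs hK hm2, one_mul]
  · rw [← phi_star, star_one]
  · have hd : ∀ i : Fin (m + 1), (phi hs hK (m + 1) 1 i i : H →L[ℂ] H)
        = V (pr 0 (s - (i : ℕ))) := by
      intro i
      change W hs i * 1 * star (W hs i) = _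
      rw [mul_one, W_mul_star]
      apply V_congr
      intro x y
      have h4 := x.2.1
      have h5 : (0:ℝ) ≤ (i : ℕ) := by positivity
      rw [mem_pr, mem_pr]
      constructor
      · rintro ⟨⟨h1, h2⟩, h3⟩
        exact ⟨⟨h4, h2⟩, h3⟩
      · rintro ⟨⟨h1, h2⟩, h3⟩
        exact ⟨⟨by linarith, h2⟩, h3⟩
    rw [Fin.sum_univ_castSucc]
    have h1 : ∀ i : Fin m, phi hs hK (m + 1) 1 i.castSucc i.castSucc = 1 := by
      intro i
      apply Subtype.ext
      rw [hd, V_pr_one']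
      · rfl
      · have : ((i + 1 : ℕ) : ℝ) ≤ m := by exact_mod_cast i.2
        push_cast at this
        simp only [Fin.val_castSucc]
        linarith
    have hmK : s - m ∈ K := K.sub_mem hK (natCast_mem K m)
    have h2 : phi hs hK (m + 1) 1 (Fin.last m) (Fin.last m) = PA 0 ⟨s - m, hmK⟩ := by
      apply Subtype.ext
      rw [hd]
      rfl
    simp only [h1]
    rw [h2, tr_zero tau_tracialState _ (by simp; linarith) (by push_cast at hm2; simp; linarith),
      tau_one]
    simp

end corner

end

end FG

/-- every countable set of positive reals is contained in the fundamental
group of some separable unital simple C*-algebra with unique tracial state. -/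
theorem exists_algebra_subset_fundamentalGroup
    (S : Set ℝ) (hS : S.Countable) (hSpos : ∀ s ∈ S, 0 < s) :
    ∃ (A : Type) (inst : CStarAlgebra A) (instSep : TopologicalSpace.SeparableSpace A)
      (τ : A →ₗ[ℂ] ℂ),
      IsSimpleCStarAlgebra A ∧ IsTracialState A τ ∧
      (∀ σ : A →ₗ[ℂ] ℂ, IsTracialState A σ → σ = τ) ∧
      S ⊆ fundamentalGroup A τ := by
  obtain ⟨K, hK, hSK⟩ : ∃ K : Subfield ℝ, Countable K ∧ S ⊆ K := by
    refine ⟨Subfield.closure S, ?_, Subfield.subset_closure⟩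
    rw [← Cardinal.mk_le_aleph0_iff]
    refine (Subfield.cardinalMk_closure_le_max S).trans (max_le ?_ le_rfl)
    exact Cardinal.mk_le_aleph0_iff.2 hS.to_subtype
  exact ⟨FG.Alg K, inferInstance, FG.Alg_separable hK, FG.tau K, FG.Alg_simple,
    FG.tau_tracialState, fun σ hσ => FG.tr_unique hσ FG.tau_tracialState,
    fun s hs => FG.mem_fund (hSpos s hs) (hSK hs)⟩
end

section
/- Let θ be an irrational real number that is not quadratic, i.e. there is no triple of integers (a,b,c) ≠ (0,0,0) with aθ² + bθ + c = 0. If t is a positive real number such that both t and t⁻¹ belong to the additive subgroup ℤ + ℤθ of ℝ, then t = 1. In particular IM_+(ℤ + ℤθ) = {1}. -/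
/-- The positive inner multiplier group of an additive subgroup `E` of `ℝ`:
`IM₊(E) = {t > 0 | t ∈ E, t⁻¹ ∈ E, tE = E}`. -/
def IMplus (E : AddSubgroup ℝ) : Set ℝ :=
  {t : ℝ | 0 < t ∧ t ∈ E ∧ t⁻¹ ∈ E ∧ (fun x => t * x) '' (E : Set ℝ) = (E : Set ℝ)}

/-- The additive subgroup `ℤ + ℤθ = {a + bθ : a, b ∈ ℤ}` of `ℝ`. -/
def zTheta (θ : ℝ) : AddSubgroup ℝ where
  carrier := {x : ℝ | ∃ a b : ℤ, x = (a : ℝ) + (b : ℝ) * θ}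
  zero_mem' := ⟨0, 0, by push_cast; ring⟩
  add_mem' := by
    rintro x y ⟨a, b, rfl⟩ ⟨c, d, rfl⟩
    exact ⟨a + c, b + d, by push_cast; ring⟩
  neg_mem' := by
    rintro x ⟨a, b, rfl⟩
    exact ⟨-a, -b, by push_cast; ring⟩

/-- if `θ` is irrational and not quadratic, then the only positive real
`t` with both `t` and `t⁻¹` in `ℤ + ℤθ` is `t = 1`; in particular
`IM₊(ℤ + ℤθ) = {1}`. -/
theorem IMplus_zTheta_eq_one_of_not_quadratic
    (θ : ℝ) (hirr : Irrational θ)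
    (hnq : ∀ a b c : ℤ, (a : ℝ) * θ ^ 2 + (b : ℝ) * θ + (c : ℝ) = 0 →
      a = 0 ∧ b = 0 ∧ c = 0) :
    (∀ t : ℝ, 0 < t → t ∈ zTheta θ → t⁻¹ ∈ zTheta θ → t = 1) ∧
    IMplus (zTheta θ) = {1} := by
  have key : ∀ t : ℝ, 0 < t → t ∈ zTheta θ → t⁻¹ ∈ zTheta θ → t = 1 := by
    rintro t ht ⟨a, b, hab⟩ ⟨c, d, hcd⟩
    have h1 : t * t⁻¹ = 1 := mul_inv_cancel₀ ht.ne'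
    rw [hcd] at h1
    rw [hab] at h1
    obtain ⟨h2, h3, h4⟩ := hnq (b * d) (a * d + b * c) (a * c - 1) (by
      push_cast
      linear_combination h1)
    have hac : a * c = 1 := by linarith
    have hb : b = 0 := by
      rcases mul_eq_zero.mp h2 with h | h
      · exact h
      · subst h
        have : b * c = 0 := by linarith
        rcases mul_eq_zero.mp this with h | h
        · exact h
        · subst h
          simp at hac
    subst hb
    rcases Int.eq_one_or_neg_one_of_mul_eq_one hac with h | h
    · subst h
      rw [hab]
      simp
    · subst h
      rw [hab] at ht
      norm_num at ht
  refine ⟨key, ?_⟩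
  ext t
  constructor
  · rintro ⟨h0, h1, h2, _⟩
    exact key t h0 h1 h2
  · intro h
    have h : t = 1 := h
    subst h
    have hm : (1 : ℝ) ∈ zTheta θ := ⟨1, 0, by simp⟩
    refine ⟨one_pos, hm, by simpa using hm, by simp⟩
end

section
/- Let θ be an irrational real number that is a quadratic algebraic integer, i.e. θ² + lθ + m = 0 for some integers l, m. Then ℤ + ℤθ is a unital subring of ℝ, and its group of positive invertible elements (ℤ + ℤθ)^×_+ = {t ∈ ℝ : t > 0, t ∈ ℤ + ℤθ, t⁻¹ ∈ ℤ + ℤθ} is infinite cyclic: there exists a real number ε₀ > 1 such that (ℤ + ℤθ)^×_+ = {ε₀^n : n ∈ ℤ}, and ε₀ is the smallest element of (ℤ + ℤθ)^×_+ exceeding 1. -/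
theorem zT_mem (θ x : ℝ) : x ∈ zTheta θ ↔ ∃ a b : ℤ, x = (a : ℝ) + (b : ℝ) * θ := Iff.rfl

theorem zT_one (θ : ℝ) : (1 : ℝ) ∈ zTheta θ := ⟨1, 0, by simp⟩

theorem zT_mul (θ : ℝ) (l m : ℤ) (hquad : θ ^ 2 + (l : ℝ) * θ + (m : ℝ) = 0)
    (x : ℝ) (hx : x ∈ zTheta θ) (y : ℝ) (hy : y ∈ zTheta θ) : x * y ∈ zTheta θ := by
  obtain ⟨a, b, rfl⟩ := hx
  obtain ⟨c, d, rfl⟩ := hy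
  refine ⟨a * c - m * (b * d), a * d + b * c - l * (b * d), ?_⟩
  push_cast
  linear_combination (b * d : ℝ) * hquad

theorem zT_indep (θ : ℝ) (hirr : Irrational θ) (a b : ℤ) (h : (a : ℝ) + b * θ = 0) :
    a = 0 ∧ b = 0 := by
  have hb : b = 0 := by
    by_contra hb
    have hb' : (b : ℝ) ≠ 0 := by exact_mod_cast hb
    apply hirr
    refine ⟨(-a : ℚ) / b, ?_⟩
    push_cast
    field_simp
    linarith
  subst hb
  simpa using h

theorem zT_norm (θ : ℝ) (hirr : Irrational θ) (l m : ℤ)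
    (hquad : θ ^ 2 + (l : ℝ) * θ + (m : ℝ) = 0) (a b c d : ℤ)
    (h : ((a : ℝ) + b * θ) * (c + d * θ) = 1) :
    |((a : ℝ) + b * θ) * (a + b * (-l - θ))| = 1 := by
  obtain ⟨h1, h2⟩ := zT_indep θ hirr (a * c - m * (b * d) - 1) (a * d + b * c - l * (b * d)) (by
    push_cast
    linear_combination h - (b * d : ℝ) * hquad)
  have hu : (a ^ 2 - l * a * b + m * b ^ 2) * (c ^ 2 - l * c * d + m * d ^ 2) = 1 := by
    have h1' : a * c - m * (b * d) = 1 := by linarith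
    have : (a ^ 2 - l * a * b + m * b ^ 2) * (c ^ 2 - l * c * d + m * d ^ 2) =
      (a * c - m * (b * d)) ^ 2 - l * (a * c - m * (b * d)) * (a * d + b * c - l * (b * d))
        + m * (a * d + b * c - l * (b * d)) ^ 2 := by ring
    rw [this, h1', h2]; ring
  have h3 : |a ^ 2 - l * a * b + m * b ^ 2| = 1 := Int.isUnit_iff_abs_eq.1 (IsUnit.of_mul_eq_one _ hu)
  have h4 : ((a : ℝ) + b * θ) * (a + b * (-l - θ)) =
      ((a ^ 2 - l * a * b + m * b ^ 2 : ℤ) : ℝ) := by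
    push_cast
    linear_combination -(b ^ 2 : ℝ) * hquad
  rw [h4, ← Int.cast_abs, h3]; simp

theorem zT_finite (θ : ℝ) (hirr : Irrational θ) (l m : ℤ)
    (hquad : θ ^ 2 + (l : ℝ) * θ + (m : ℝ) = 0) (M : ℝ) :
    {t : ℝ | 1 < t ∧ t ≤ M ∧ t ∈ zTheta θ ∧ t⁻¹ ∈ zTheta θ}.Finite := by
  have hw : 2 * θ + l ≠ 0 := by
    intro h
    have := zT_indep θ hirr l 2 (by push_cast; linarith)
    omega
  have hw' : 0 < |2 * θ + l| := abs_pos.2 hw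
  set B : ℝ := (M + 1) / |2 * θ + l| with hB
  set A : ℝ := M + B * |θ| with hA
  refine Set.Finite.subset (((Set.finite_Icc (-⌈A⌉) ⌈A⌉).prod
    (Set.finite_Icc (-⌈B⌉) ⌈B⌉)).image (fun p : ℤ × ℤ => (p.1 : ℝ) + p.2 * θ)) ?_
  rintro t ⟨h1, hM, ⟨a, b, hab⟩, ⟨c, d, hcd⟩⟩
  have ht0 : 0 < t := by linarith
  have hN := zT_norm θ hirr l m hquad a b c d (by
    rw [← hab, ← hcd]; exact mul_inv_cancel₀ ht0.ne')
  rw [← hab, abs_mul, abs_of_pos ht0] at hN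
  have hc : |(a : ℝ) + b * (-l - θ)| ≤ 1 := by
    by_contra hc
    push Not at hc
    nlinarith
  have hbw : |(b : ℝ)| * |2 * θ + l| ≤ M + 1 := by
    rw [← abs_mul]
    have : (b : ℝ) * (2 * θ + l) = t - (a + b * (-l - θ)) := by rw [hab]; ring
    rw [this]
    rw [abs_le] at hc ⊢
    constructor <;> linarith [hc.1, hc.2]
  have hb : |(b : ℝ)| ≤ B := by rw [hB, le_div_iff₀ hw']; exact hbw
  have ha : |(a : ℝ)| ≤ A := by
    have : (a : ℝ) = t - b * θ := by rw [hab]; ring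
    rw [this]
    calc |t - b * θ| ≤ |t| + |b * θ| := abs_sub _ _
      _ = t + |(b : ℝ)| * |θ| := by rw [abs_of_pos ht0, abs_mul]
      _ ≤ A := by rw [hA]; gcongr
  have key : ∀ (k : ℤ) (R : ℝ), |(k : ℝ)| ≤ R → k ∈ Set.Icc (-⌈R⌉) ⌈R⌉ := by
    intro k R h
    have : ((|k| : ℤ) : ℝ) ≤ ⌈R⌉ := by
      rw [Int.cast_abs]; exact h.trans (Int.le_ceil R)
    exact abs_le.1 (by exact_mod_cast this)
  exact ⟨(a, b), ⟨key a A ha, key b B hb⟩, hab.symm⟩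

theorem zT_exists (θ : ℝ) (hirr : Irrational θ) (l m : ℤ)
    (hquad : θ ^ 2 + (l : ℝ) * θ + (m : ℝ) = 0) :
    ∃ t : ℝ, 1 < t ∧ t ∈ zTheta θ ∧ t⁻¹ ∈ zTheta θ := by
  have hw : 2 * θ + l ≠ 0 := by
    intro h
    have := zT_indep θ hirr l 2 (by push_cast; linarith)
    omega
  have hD : (2 * θ + l) ^ 2 = ((l ^ 2 - 4 * m : ℤ) : ℝ) := by
    push_cast
    linear_combination 4 * hquad
  have hpos : 0 < l ^ 2 - 4 * m := by
    have : (0 : ℝ) < ((l ^ 2 - 4 * m : ℤ) : ℝ) := by rw [← hD]; positivity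
    exact_mod_cast this
  have hsq : ¬ IsSquare (l ^ 2 - 4 * m) := by
    rintro ⟨k, hk⟩
    rw [hk] at hD
    push_cast at hD
    have : (2 * θ + l - k) * (2 * θ + l + k) = 0 := by linear_combination hD
    rcases mul_eq_zero.1 this with h | h
    · have := zT_indep θ hirr (l - k) 2 (by push_cast; linarith)
      omega
    · have := zT_indep θ hirr (l + k) 2 (by push_cast; linarith)
      omega
  obtain ⟨x, y, hxy, hy⟩ := Pell.exists_of_not_isSquare hpos hsq
  have hxy' : (x : ℝ) ^ 2 - (2 * θ + l) ^ 2 * y ^ 2 = 1 := by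
    rw [hD]; exact_mod_cast hxy
  have hy' : (y : ℝ) ≠ 0 := by exact_mod_cast hy
  have hp : 0 < |(y : ℝ) * (2 * θ + l)| := abs_pos.2 (mul_ne_zero hy' hw)
  have hx1 : 1 < |(x : ℝ)| := by
    rw [← one_lt_sq_iff_one_lt_abs]
    have : 0 < ((y : ℝ) * (2 * θ + l)) ^ 2 := by positivity
    nlinarith
  have gen : ∀ X Y : ℤ, ((X : ℝ) + Y * (2 * θ + l)) ∈ zTheta θ := by
    intro X Y
    exact ⟨X + Y * l, 2 * Y, by push_cast; ring⟩
  have fin : ∀ X Y : ℤ, (X : ℝ) ^ 2 - (2 * θ + l) ^ 2 * Y ^ 2 = 1 → 1 < (X : ℝ) →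
      0 ≤ (Y : ℝ) * (2 * θ + l) → ∃ t : ℝ, 1 < t ∧ t ∈ zTheta θ ∧ t⁻¹ ∈ zTheta θ := by
    intro X Y h hX hY
    refine ⟨X + Y * (2 * θ + l), by linarith, gen X Y, ?_⟩
    have : ((X : ℝ) + Y * (2 * θ + l))⁻¹ = X + ((-Y : ℤ) : ℝ) * (2 * θ + l) := by
      apply inv_eq_of_mul_eq_one_right
      push_cast
      linear_combination h
    rw [this]
    exact gen X (-Y)
  rcases le_total 0 ((y : ℝ) * (2 * θ + l)) with h | h
  · exact fin |x| y (by rw [Int.cast_abs, sq_abs]; exact hxy') (by rwa [Int.cast_abs]) h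
  · exact fin |x| (-y) (by push_cast; rw [sq_abs]; linarith) (by rwa [Int.cast_abs])
      (by push_cast; linarith)

/-- if `θ` is an irrational quadratic algebraic integer, then `ℤ + ℤθ`
is a unital subring of `ℝ` and its group of positive invertible elements is infinite
cyclic, generated by its smallest element `ε₀ > 1`. -/
theorem posUnits_zTheta_infinite_cyclic
    (θ : ℝ) (hirr : Irrational θ) (l m : ℤ)
    (hquad : θ ^ 2 + (l : ℝ) * θ + (m : ℝ) = 0) :
    ((1 : ℝ) ∈ zTheta θ ∧
      ∀ x ∈ zTheta θ, ∀ y ∈ zTheta θ, x * y ∈ zTheta θ) ∧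
    ∃ ε₀ : ℝ, 1 < ε₀ ∧
      {t : ℝ | 0 < t ∧ t ∈ zTheta θ ∧ t⁻¹ ∈ zTheta θ} =
        {x : ℝ | ∃ n : ℤ, x = ε₀ ^ n} ∧
      (∀ t : ℝ, 0 < t → t ∈ zTheta θ → t⁻¹ ∈ zTheta θ → 1 < t → ε₀ ≤ t) := by
  have hmul := zT_mul θ l m hquad
  refine ⟨⟨zT_one θ, hmul⟩, ?_⟩
  obtain ⟨T, hT1, hT, hTi⟩ := zT_exists θ hirr l m hquad
  obtain ⟨e, ⟨he1, heT, he, hei⟩, hmin⟩ := Set.exists_min_image _ id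
    (zT_finite θ hirr l m hquad T) ⟨T, hT1, le_rfl, hT, hTi⟩
  have hmin' : ∀ t : ℝ, 0 < t → t ∈ zTheta θ → t⁻¹ ∈ zTheta θ → 1 < t → e ≤ t := by
    intro t _ h1 h2 h3
    rcases le_total t T with h | h
    · exact hmin t ⟨h3, h, h1, h2⟩
    · exact heT.trans h
  have he0 : 0 < e := by linarith
  have hpow : ∀ x ∈ zTheta θ, ∀ n : ℕ, x ^ n ∈ zTheta θ := by
    intro x hx n
    induction n with
    | zero => simpa using zT_one θ
    | succ k ih => rw [pow_succ]; exact hmul _ ih _ hx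
  have hz : ∀ n : ℤ, e ^ n ∈ zTheta θ := by
    intro n
    obtain ⟨k, rfl | rfl⟩ := n.eq_nat_or_neg
    · rw [zpow_natCast]; exact hpow e he k
    · rw [zpow_neg, zpow_natCast, ← inv_pow]; exact hpow _ hei k
  refine ⟨e, he1, ?_, hmin'⟩
  ext t
  constructor
  · rintro ⟨ht0, ht, hti⟩
    obtain ⟨n, hn1, hn2⟩ := exists_mem_Ico_zpow ht0 he1
    refine ⟨n, ?_⟩
    have hen : 0 < e ^ n := zpow_pos he0 n
    by_contra hne
    have hlt : e ^ n < t := lt_of_le_of_ne hn1 (Ne.symm hne)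
    have h := hmin' (t * e ^ (-n)) (mul_pos ht0 (zpow_pos he0 _)) (hmul _ ht _ (hz _))
      (by rw [mul_inv, zpow_neg, inv_inv]; exact hmul _ hti _ (hz n))
      (by rw [zpow_neg, ← div_eq_mul_inv, one_lt_div hen]; exact hlt)
    rw [zpow_neg, ← div_eq_mul_inv, le_div_iff₀ hen] at h
    rw [zpow_add_one₀ he0.ne'] at hn2
    linarith
  · rintro ⟨n, rfl⟩
    exact ⟨zpow_pos he0 n, hz n, by rw [← zpow_neg]; exact hz _⟩
end

section
/- Let θ = 1/√5. Although ℤ + ℤθ is not a subring of ℝ, one has IM_+(ℤ + ℤ(1/√5)) = {(2 + √5)^n : n ∈ ℤ}. -/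
lemma s5sq : Real.sqrt 5 * Real.sqrt 5 = 5 := Real.mul_self_sqrt (by norm_num)

lemma s5pos : 0 < Real.sqrt 5 := Real.sqrt_pos.2 (by norm_num)

lemma th5 : (1 / Real.sqrt 5) = Real.sqrt 5 / 5 := by
  have := s5sq
  have := s5pos
  field_simp
  nlinarith

lemma s5indep (p q : ℤ) (h : (p : ℝ) + q * Real.sqrt 5 = 0) : p = 0 ∧ q = 0 := by
  have hirr : Irrational (Real.sqrt 5) := by
    simpa using Nat.Prime.irrational_sqrt (p := 5) (by norm_num)
  have hq : q = 0 := by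
    by_contra hq
    have hq' : (q : ℝ) ≠ 0 := by exact_mod_cast hq
    apply hirr
    refine ⟨-p / q, ?_⟩
    push_cast
    field_simp
    linarith
  subst hq
  simp at h
  exact ⟨h, rfl⟩

lemma mem_E (x : ℝ) : x ∈ zTheta (1 / Real.sqrt 5) ↔
    ∃ a b : ℤ, x = (a : ℝ) + (b : ℝ) * (Real.sqrt 5 / 5) := by
  rw [th5]; rfl

lemma lemA (x : ℝ) (h : x ∈ zTheta (1 / Real.sqrt 5))
    (h' : x * (Real.sqrt 5 / 5) ∈ zTheta (1 / Real.sqrt 5)) :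
    ∃ a c : ℤ, x = a + c * Real.sqrt 5 := by
  rw [mem_E] at h h'
  obtain ⟨a, b, rfl⟩ := h
  obtain ⟨p, q, h⟩ := h'
  have := s5sq
  obtain ⟨h1, h2⟩ := s5indep (b - 5 * p) (a - q) (by push_cast; linear_combination 5 * h - (b / 5 : ℝ) * this)
  have hb : (b : ℝ) = 5 * p := by exact_mod_cast (by omega : b = 5 * p)
  exact ⟨a, p, by rw [hb]; ring⟩

def U5 : Set ℝ := {x | ∃ a c : ℤ, x = a + c * Real.sqrt 5 ∧
  (a * a - 5 * c * c = 1 ∨ a * a - 5 * c * c = -1)}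

lemma U5_mul {x y : ℝ} (hx : x ∈ U5) (hy : y ∈ U5) : x * y ∈ U5 := by
  obtain ⟨a, c, rfl, h⟩ := hx
  obtain ⟨a', c', rfl, h'⟩ := hy
  refine ⟨a * a' + 5 * c * c', a * c' + c * a', ?_, ?_⟩
  · push_cast
    linear_combination (c * c' : ℝ) * s5sq
  · have e : (a * a' + 5 * c * c') * (a * a' + 5 * c * c')
      - 5 * (a * c' + c * a') * (a * c' + c * a')
      = (a * a - 5 * c * c) * (a' * a' - 5 * c' * c') := by ring
    rw [e]
    rcases h with h | h <;> rcases h' with h' | h' <;> rw [h, h'] <;> norm_num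

lemma U5_inv {x : ℝ} (hx : x ∈ U5) : x⁻¹ ∈ U5 := by
  obtain ⟨a, c, rfl, h⟩ := hx
  rcases h with h | h
  · refine ⟨a, -c, ?_, Or.inl (by linarith)⟩
    apply inv_eq_of_mul_eq_one_right
    have : ((a * a - 5 * c * c : ℤ) : ℝ) = 1 := by rw [h]; norm_num
    push_cast at this ⊢
    linear_combination this - (c * c : ℝ) * s5sq
  · refine ⟨-a, c, ?_, Or.inr (by linarith)⟩
    apply inv_eq_of_mul_eq_one_right
    have : ((a * a - 5 * c * c : ℤ) : ℝ) = -1 := by rw [h]; norm_num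
    push_cast at this ⊢
    linear_combination -this + (c * c : ℝ) * s5sq

lemma U5_pow (n : ℕ) : (2 + Real.sqrt 5) ^ n ∈ U5 := by
  induction n with
  | zero => exact ⟨1, 0, by simp, by simp⟩
  | succ n ih =>
    rw [pow_succ]
    exact U5_mul ih ⟨2, 1, by simp, by norm_num⟩

lemma U5_zpow (n : ℤ) : (2 + Real.sqrt 5) ^ n ∈ U5 := by
  obtain ⟨m, rfl | rfl⟩ := n.eq_nat_or_neg
  · rw [zpow_natCast]; exact U5_pow m
  · rw [zpow_neg, zpow_natCast]; exact U5_inv (U5_pow m)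

lemma U5_mem {x : ℝ} (hx : x ∈ U5) : x ∈ zTheta (1 / Real.sqrt 5) := by
  obtain ⟨a, c, rfl, -⟩ := hx
  rw [mem_E]
  exact ⟨a, 5 * c, by push_cast; ring⟩

lemma U5_smul {x y : ℝ} (hx : x ∈ U5) (hy : y ∈ zTheta (1 / Real.sqrt 5)) :
    x * y ∈ zTheta (1 / Real.sqrt 5) := by
  obtain ⟨a, c, rfl, -⟩ := hx
  rw [mem_E] at hy ⊢
  obtain ⟨p, q, rfl⟩ := hy
  refine ⟨a * p + c * q, a * q + 5 * c * p, ?_⟩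
  push_cast
  linear_combination (c * q / 5 : ℝ) * s5sq

lemma U5_fund {v : ℝ} (hv : v ∈ U5) (h1 : 1 ≤ v) (h2 : v < 2 + Real.sqrt 5) : v = 1 := by
  obtain ⟨a, c, rfl, h⟩ := hv
  have hs := s5sq
  have hp := s5pos
  have hs2 : 2 < Real.sqrt 5 := by nlinarith
  set s := Real.sqrt 5
  rcases h with h | h
  · have hr : ((a * a - 5 * c * c : ℤ) : ℝ) = 1 := by rw [h]; norm_num
    push_cast at hr
    have e : (a + c * s) * (a - c * s) = 1 := by linear_combination hr - (c * c : ℝ) * hs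
    set w : ℝ := a - c * s with hw
    have hw0 : 0 < w := by
      by_contra hh
      nlinarith
    have hw1 : w ≤ 1 := by nlinarith
    have hwl : s - 2 < w := by
      by_contra hh
      push Not at hh
      nlinarith
    have c0 : (0 : ℝ) ≤ c := by nlinarith
    have c1 : (c : ℝ) < 1 := by nlinarith
    have c0' : 0 ≤ c := by exact_mod_cast c0
    have c1' : c < 1 := by exact_mod_cast c1
    obtain rfl : c = 0 := by omega
    simp at hw hr h1
    have : (a : ℝ) = 1 := by nlinarith
    simpa using this
  · exfalso
    have hr : ((a * a - 5 * c * c : ℤ) : ℝ) = -1 := by rw [h]; norm_num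
    push_cast at hr
    have e : (a + c * s) * (c * s - a) = 1 := by linear_combination -hr + (c * c : ℝ) * hs
    have hx : (a : ℝ) + c * s > 0 := by linarith
    generalize hv : (a : ℝ) + c * s = v at *
    generalize hw : c * s - a = w at *
    have hw0 : 0 < w := by
      by_contra hh
      nlinarith
    have hw1 : w ≤ 1 := by nlinarith
    have hk : v + w < 2 * s := by
      have : 0 < (2 + s - v) * (2 + s - w) := mul_pos (by linarith) (by linarith)
      nlinarith
    have c0 : (0 : ℝ) < c := by
      by_contra hh
      push Not at hh
      nlinarith
    have c1 : (c : ℝ) < 1 := by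
      by_contra hh
      push Not at hh
      nlinarith
    have c0' : 0 < c := by exact_mod_cast c0
    have c1' : c < 1 := by exact_mod_cast c1
    omega

/-- `ℤ + ℤ(1/√5)` is not closed under multiplication (hence not a
subring of `ℝ`), yet `IM₊(ℤ + ℤ(1/√5))` is the infinite cyclic group generated by
`2 + √5`. -/
theorem IMplus_zTheta_inv_sqrt5 :
    (¬ ∀ x ∈ zTheta (1 / Real.sqrt 5), ∀ y ∈ zTheta (1 / Real.sqrt 5),
      x * y ∈ zTheta (1 / Real.sqrt 5)) ∧
    IMplus (zTheta (1 / Real.sqrt 5)) =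
      {x : ℝ | ∃ n : ℤ, x = (2 + Real.sqrt 5) ^ n} := by
  have hp := s5pos
  have hth : Real.sqrt 5 / 5 ∈ zTheta (1 / Real.sqrt 5) := by
    rw [mem_E]; exact ⟨0, 1, by simp⟩
  constructor
  · intro h
    have := h _ hth _ hth
    rw [mem_E] at this
    obtain ⟨a, b, h⟩ := this
    have hs := s5sq
    obtain ⟨h1, -⟩ := s5indep (5 * a - 1) b (by push_cast; nlinarith)
    omega
  · ext t
    constructor
    · rintro ⟨h0, h1, h2, h3⟩
      have ht1 : t * (Real.sqrt 5 / 5) ∈ zTheta (1 / Real.sqrt 5) := by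
        have : t * (Real.sqrt 5 / 5) ∈ (zTheta (1 / Real.sqrt 5) : Set ℝ) := by
          rw [← h3]; exact ⟨_, hth, rfl⟩
        exact this
      have ht2 : t⁻¹ * (Real.sqrt 5 / 5) ∈ zTheta (1 / Real.sqrt 5) := by
        have : Real.sqrt 5 / 5 ∈ (zTheta (1 / Real.sqrt 5) : Set ℝ) := hth
        rw [← h3] at this
        obtain ⟨y, hy, e⟩ := this
        simp only at e
        rw [← e, inv_mul_cancel_left₀ h0.ne']
        exact hy
      obtain ⟨a, c, e1⟩ := lemA _ h1 ht1
      obtain ⟨a', c', e2⟩ := lemA _ h2 ht2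
      have e : t * t⁻¹ = 1 := mul_inv_cancel₀ h0.ne'
      rw [e2, e1] at e
      obtain ⟨k1, k2⟩ := s5indep (a * a' + 5 * c * c' - 1) (a * c' + c * a') (by
        push_cast
        linear_combination e - (c * c' : ℝ) * s5sq)
      have hU : t ∈ U5 := by
        refine ⟨a, c, e1, ?_⟩
        apply Int.isUnit_iff.1
        apply IsUnit.of_mul_eq_one (a' * a' - 5 * c' * c')
        linear_combination (a * a' + 5 * c * c' + 1) * k1 - 5 * (a * c' + c * a') * k2
      obtain ⟨n, hn1, hn2⟩ := exists_mem_Ico_zpow (y := 2 + Real.sqrt 5) h0 (by linarith)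
      have hu : 0 < (2 + Real.sqrt 5) ^ n := zpow_pos (by linarith) n
      have hv := U5_fund (U5_mul hU (U5_inv (U5_zpow n)))
        (by rw [← div_eq_mul_inv, one_le_div hu]; exact hn1)
        (by
          rw [← div_eq_mul_inv, div_lt_iff₀ hu]
          rw [zpow_add_one₀ (by linarith)] at hn2
          linarith)
      refine ⟨n, ?_⟩
      rw [← div_eq_mul_inv, div_eq_one_iff_eq hu.ne'] at hv
      exact hv
    · rintro ⟨n, rfl⟩
      have hu : 0 < (2 + Real.sqrt 5) ^ n := zpow_pos (by linarith) n
      have hU := U5_zpow n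
      refine ⟨hu, U5_mem hU, U5_mem (U5_inv hU), ?_⟩
      ext y
      constructor
      · rintro ⟨x, hx, rfl⟩
        exact U5_smul hU hx
      · intro hy
        exact ⟨_, U5_smul (U5_inv hU) hy, mul_inv_cancel_left₀ hu.ne' y⟩
end

section
/- Let θ be an irrational real number satisfying kθ² + lθ + m = 0 for integers k, l, m with k ≥ 1 and gcd(k,l,m) = 1. Then {cθ + d : a,b,c,d ∈ ℤ, ad − bc = ±1, (aθ + b)/(cθ + d) = θ} equals the group of invertible elements of the ring ℤ + ℤkθ, i.e. equals {t ∈ ℝ : t ≠ 0, t ∈ ℤ + ℤkθ, t⁻¹ ∈ ℤ + ℤkθ}. -/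
theorem aux_lin (θ : ℝ) (hirr : Irrational θ) (p q : ℤ) (h : (p : ℝ) + q * θ = 0) :
    p = 0 ∧ q = 0 := by
  have hq : q = 0 := by
    by_contra hq
    have hq' : (q : ℝ) ≠ 0 := by exact_mod_cast hq
    apply hirr
    refine ⟨-(p : ℚ) / q, ?_⟩
    push_cast
    field_simp
    linarith
  subst hq
  refine ⟨?_, rfl⟩
  have : (p : ℝ) = 0 := by simpa using h
  exact_mod_cast this

/-- for `θ` irrational with `kθ² + lθ + m = 0`, `k ≥ 1` and
`gcd(k,l,m) = 1`, the set `{cθ + d : a,b,c,d ∈ ℤ, ad - bc = ±1, (aθ+b)/(cθ+d) = θ}`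
equals the group of invertible elements of the ring `ℤ + ℤkθ`. -/
theorem mobius_stabilizer_eq_units
    (θ : ℝ) (hirr : Irrational θ) (k l m : ℤ) (hk : 1 ≤ k)
    (hgcd : Int.gcd (Int.gcd k l) m = 1)
    (hquad : (k : ℝ) * θ ^ 2 + (l : ℝ) * θ + (m : ℝ) = 0) :
    {x : ℝ | ∃ a b c d : ℤ, (a * d - b * c = 1 ∨ a * d - b * c = -1) ∧
        ((a : ℝ) * θ + (b : ℝ)) / ((c : ℝ) * θ + (d : ℝ)) = θ ∧
        x = (c : ℝ) * θ + (d : ℝ)} =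
      {t : ℝ | t ≠ 0 ∧ t ∈ zTheta ((k : ℝ) * θ) ∧ t⁻¹ ∈ zTheta ((k : ℝ) * θ)} := by
  obtain ⟨u, v, w, huvw⟩ : ∃ u v w : ℤ, k * u + l * v + m * w = 1 := by
    have h1 := Int.gcd_eq_gcd_ab (Int.gcd k l) m
    have h2 := Int.gcd_eq_gcd_ab k l
    rw [hgcd, h2] at h1
    refine ⟨Int.gcdA k l * Int.gcdA (Int.gcd k l) m, Int.gcdB k l * Int.gcdA (Int.gcd k l) m,
      Int.gcdB (Int.gcd k l) m, ?_⟩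
    rw [h2]
    push_cast at h1
    linarith
  have hk0 : k ≠ 0 := by omega
  ext x
  simp only [Set.mem_ofPred_eq]
  constructor
  · rintro ⟨a, b, c, d, hdet, hfix, rfl⟩
    have hne : (c : ℝ) * θ + d ≠ 0 := by
      intro h
      rw [h, div_zero] at hfix
      exact hirr ⟨0, by simpa using hfix⟩
    rw [div_eq_iff hne] at hfix
    obtain ⟨e1, e2⟩ := aux_lin θ hirr (-(c * m) - k * b) (k * (d - a) - c * l) (by
      push_cast
      linear_combination (-(k : ℝ)) * hfix - c * hquad)
    obtain ⟨n, rfl⟩ : ∃ n, c = k * n :=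
      ⟨c * u + v * (d - a) - w * b, by linear_combination (-c) * huvw + (-v) * e2 - w * e1⟩
    have hb : b = -(n * m) := mul_left_cancel₀ hk0 (by linear_combination -e1)
    have ha : a = d - n * l := mul_left_cancel₀ hk0 (by linear_combination -e2)
    subst hb ha
    refine ⟨hne, ⟨d, n, by push_cast; ring⟩, ?_⟩
    rcases hdet with h | h
    · refine ⟨d - n * l, -n, ?_⟩
      have h' : ((d : ℝ) - n * l) * d - -(n * m) * (k * n) = 1 := by exact_mod_cast h
      apply inv_eq_of_mul_eq_one_right
      push_cast
      linear_combination h' - n ^ 2 * k * hquad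
    · refine ⟨-(d - n * l), n, ?_⟩
      have h' : ((d : ℝ) - n * l) * d - -(n * m) * (k * n) = -1 := by exact_mod_cast h
      apply inv_eq_of_mul_eq_one_right
      push_cast
      linear_combination -h' + n ^ 2 * k * hquad
  · rintro ⟨hne, ⟨d, n, rfl⟩, ⟨e, f, hinv⟩⟩
    have hm := mul_inv_cancel₀ hne
    rw [hinv] at hm
    obtain ⟨e1, e2⟩ := aux_lin θ hirr (d * e - n * f * m * k - 1)
        (k * (d * f + n * e - n * f * l)) (by
      push_cast
      linear_combination hm - n * f * k * hquad)
    have e3 := (mul_eq_zero.mp e2).resolve_left hk0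
    have hN : (d ^ 2 - d * n * l + n ^ 2 * k * m) * (e ^ 2 - e * f * l + f ^ 2 * k * m) = 1 := by
      have e1' : d * e - n * f * m * k = 1 := by linarith
      have : (d ^ 2 - d * n * l + n ^ 2 * k * m) * (e ^ 2 - e * f * l + f ^ 2 * k * m)
        = (d * e - n * f * m * k) ^ 2
          - (d * e - n * f * m * k) * (d * f + n * e - n * f * l) * l
          + (d * f + n * e - n * f * l) ^ 2 * (k * m) := by ring
      rw [this, e1', e3]
      ring
    refine ⟨d - n * l, -(n * m), k * n, d, ?_, ?_, by push_cast; ring⟩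
    · rcases Int.isUnit_iff.mp (IsUnit.of_mul_eq_one _ hN) with h | h
      · left; linarith
      · right; linarith
    · rw [div_eq_iff (by intro h; apply hne; push_cast at h; linarith)]
      push_cast
      linear_combination -n * hquad
end
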